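/- Subgroups of groups of subexponential growth: Let B be a group. There exists a group W with a finite generating set such that W has subexponential growth and B embeds as a subgroup of W, if and only if B is countable and locally of subexponential growth (i.e., every finitely generated subgroup of B has subexponential growth). -/

import Mathlib

/-- The word norm of `g` with respect to a generating set `S`. -/
noncomputable def wordNorm {G : Type*} [Group G] (S : Set G) (g : G) : ℕ :=
  sInf {n | ∃ l : List G, (∀ s ∈ l, s ∈ S) ∧ l.length = n ∧ l.prod = g}

/-- The growth function `v_{G,S}(R) = #{g : ‖g‖_S ≤ R}`. -/
noncomputable def growthFn {G : Type*} [Group G] (S : Set G) (R : ℕ) : ℕ :=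
  Nat.card {g : G // wordNorm S g ≤ R}

/-- `(G, S)` has subexponential growth: `v_{G,S}(R)^{1/R} → 1` as `R → ∞`. -/
def HasSubexpGrowth {G : Type*} [Group G] (S : Set G) : Prop :=
  Filter.Tendsto (fun R : ℕ => (growthFn S R : ℝ) ^ ((R : ℝ)⁻¹)) Filter.atTop (nhds 1)

namespace SubexpEmb

/-- Products of at most `r` elements of `T`. -/
def gball {G : Type*} [Group G] (T : Set G) (r : ℕ) : Set G :=
  {g | ∃ l : List G, (∀ s ∈ l, s ∈ T) ∧ l.length ≤ r ∧ l.prod = g}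

/-- Subexponential bound on the size of balls. -/
def Sub {G : Type*} [Group G] (T : Set G) : Prop :=
  ∀ ε : ℝ, 0 < ε → ∃ K : ℝ, ∀ r : ℕ, ((gball T r).ncard : ℝ) ≤ K * Real.exp (ε * r)

section basics
variable {G : Type*} [Group G] {H : Type*} [Group H]

lemma one_mem_gball (T : Set G) (r : ℕ) : (1 : G) ∈ gball T r :=
  ⟨[], by simp, by simp, by simp⟩

lemma gball_mono_r (T : Set G) {r r' : ℕ} (h : r ≤ r') : gball T r ⊆ gball T r' := by
  rintro g ⟨l, h1, h2, h3⟩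
  exact ⟨l, h1, h2.trans h, h3⟩

lemma gball_mono {T T' : Set G} (h : T ⊆ T') (r : ℕ) : gball T r ⊆ gball T' r := by
  rintro g ⟨l, h1, h2, h3⟩
  exact ⟨l, fun s hs => h (h1 s hs), h2, h3⟩

lemma mul_mem_gball {T : Set G} {r r' : ℕ} {g g' : G} (h : g ∈ gball T r) (h' : g' ∈ gball T r') :
    g * g' ∈ gball T (r + r') := by
  obtain ⟨l, h1, h2, h3⟩ := h
  obtain ⟨l', h1', h2', h3'⟩ := h'
  refine ⟨l ++ l', ?_, ?_, ?_⟩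
  · intro s hs
    rcases List.mem_append.1 hs with h | h
    · exact h1 s h
    · exact h1' s h
  · simp; omega
  · simp [h3, h3']

lemma mem_gball_one {T : Set G} {g : G} (h : g ∈ T) : g ∈ gball T 1 :=
  ⟨[g], by simpa using h, by simp, by simp⟩

lemma gball_finite {T : Set G} (hT : T.Finite) (r : ℕ) : (gball T r).Finite := by
  induction r with
  | zero =>
    refine (Set.finite_singleton (1 : G)).subset ?_
    rintro g ⟨l, h1, h2, h3⟩
    have : l = [] := by simpa using h2
    subst this
    simpa using h3.symm
  | succ r ih =>
    refine ((Set.finite_singleton (1 : G)).union (hT.image2 (fun a b => a * b) ih)).subset ?_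
    rintro g ⟨l, h1, h2, h3⟩
    cases l with
    | nil => left; simpa using h3.symm
    | cons a l =>
      right
      refine ⟨a, h1 a (by simp), l.prod, ⟨l, fun s hs => h1 s (by simp [hs]), by simpa using h2, rfl⟩, ?_⟩
      simpa using h3

lemma pow_mem_gball {T : Set G} {g : G} {m : ℕ} (h : g ∈ gball T m) (n : ℕ) :
    g ^ n ∈ gball T (n * m) := by
  induction n with
  | zero => simpa using one_mem_gball T _
  | succ n ih =>
    rw [pow_succ, Nat.succ_mul]
    exact mul_mem_gball ih h

lemma zpow_mem_gball {T : Set G} {g : G} (h : g ∈ T) (h' : g⁻¹ ∈ T) (n : ℤ) :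
    g ^ n ∈ gball T n.natAbs := by
  rcases Int.natAbs_eq n with hn | hn
  · have := pow_mem_gball (mem_gball_one h) n.natAbs
    have e : g ^ n = g ^ n.natAbs := by conv_lhs => rw [hn, zpow_natCast]
    rw [e]
    simpa using this
  · have := pow_mem_gball (mem_gball_one h') n.natAbs
    have e : g ^ n = g⁻¹ ^ n.natAbs := by conv_lhs => rw [hn, zpow_neg, zpow_natCast, ← inv_pow]
    rw [e]
    simpa using this

lemma gball_trans {S T : Set G} {m : ℕ} (h : T ⊆ gball S m) (r : ℕ) :
    gball T r ⊆ gball S (m * r) := by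
  rintro g ⟨l, h1, h2, rfl⟩
  refine gball_mono_r S (Nat.mul_le_mul_left m h2) ?_
  clear h2
  induction l with
  | nil => simpa using one_mem_gball S _
  | cons a l ih =>
    rw [List.prod_cons, List.length_cons, Nat.mul_succ, add_comm]
    exact mul_mem_gball (h (h1 a (by simp))) (ih fun s hs => h1 s (by simp [hs]))

lemma Sub.of_subset_gball {S T : Set G} (hS : S.Finite) {m : ℕ} (h : T ⊆ gball S m) (hs : Sub S) :
    Sub T := by
  intro ε hε
  obtain ⟨K, hK⟩ := hs (ε / (m + 1)) (by positivity)
  refine ⟨K, fun r => ?_⟩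
  have h1 : (gball T r).ncard ≤ (gball S (m * r)).ncard :=
    Set.ncard_le_ncard (gball_trans h r) (gball_finite hS _)
  have hK0 : 0 ≤ K := by
    have := hK 0
    have h2 : (0 : ℝ) ≤ ((gball S 0).ncard : ℝ) := by positivity
    simp at this
    linarith
  calc ((gball T r).ncard : ℝ) ≤ (gball S (m * r)).ncard := by exact_mod_cast h1
    _ ≤ K * Real.exp (ε / (m + 1) * (m * r : ℕ)) := hK _
    _ ≤ K * Real.exp (ε * r) := by
      refine mul_le_mul_of_nonneg_left (Real.exp_le_exp.2 ?_) hK0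
      push_cast
      rw [div_mul_eq_mul_div, div_le_iff₀ (by positivity)]
      have : 0 ≤ ε * r := by positivity
      nlinarith

lemma Sub.mono {S T : Set G} (hS : S.Finite) (h : T ⊆ S) (hs : Sub S) : Sub T :=
  Sub.of_subset_gball hS (m := 1) (fun _ ht => mem_gball_one (h ht)) hs

lemma gball_image (φ : G →* H) (T : Set G) (r : ℕ) : gball (φ '' T) r = φ '' gball T r := by
  ext g
  constructor
  · rintro ⟨l, h1, h2, rfl⟩
    have : ∃ l' : List G, (∀ s ∈ l', s ∈ T) ∧ l'.map φ = l := by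
      clear h2
      induction l with
      | nil => exact ⟨[], by simp, rfl⟩
      | cons a l ih =>
        obtain ⟨l', h3, h4⟩ := ih fun s hs => h1 s (by simp [hs])
        obtain ⟨b, hb, hb'⟩ := h1 a (by simp)
        exact ⟨b :: l', by simpa using ⟨hb, h3⟩, by simp [hb', h4]⟩
    obtain ⟨l', h3, rfl⟩ := this
    exact ⟨l'.prod, ⟨l', h3, by simpa using h2, rfl⟩, by rw [map_list_prod]⟩
  · rintro ⟨g, ⟨l, h1, h2, rfl⟩, rfl⟩
    refine ⟨l.map φ, ?_, by simpa using h2, by rw [map_list_prod]⟩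
    intro s hs
    obtain ⟨a, ha, rfl⟩ := List.mem_map.1 hs
    exact ⟨a, h1 a ha, rfl⟩

lemma sub_image_iff (φ : G →* H) (hφ : Function.Injective φ) (T : Set G) :
    Sub (φ '' T) ↔ Sub T := by
  unfold Sub
  simp only [gball_image, Set.ncard_image_of_injective _ hφ]

lemma exists_gball {S : Set G} (hinv : S⁻¹ = S) (hcl : Subgroup.closure S = ⊤) (g : G) :
    ∃ r, g ∈ gball S r := by
  have hg : g ∈ Subgroup.closure S := by rw [hcl]; trivial
  induction hg using Subgroup.closure_induction_left with
  | one => exact ⟨0, one_mem_gball _ _⟩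
  | mul_left x hx y _ ih =>
    obtain ⟨r, hr⟩ := ih
    exact ⟨1 + r, mul_mem_gball (mem_gball_one hx) hr⟩
  | inv_mul_cancel x hx y _ ih =>
    obtain ⟨r, hr⟩ := ih
    refine ⟨1 + r, mul_mem_gball (mem_gball_one ?_) hr⟩
    rw [← hinv]; simpa using hx

lemma wordNorm_le_iff {S : Set G} (hinv : S⁻¹ = S) (hcl : Subgroup.closure S = ⊤) (g : G) (R : ℕ) :
    wordNorm S g ≤ R ↔ g ∈ gball S R := by
  constructor
  · intro h
    obtain ⟨r, l, h1, h2, h3⟩ := exists_gball hinv hcl g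
    have hne : {n | ∃ l : List G, (∀ s ∈ l, s ∈ S) ∧ l.length = n ∧ l.prod = g}.Nonempty :=
      ⟨_, l, h1, rfl, h3⟩
    obtain ⟨l', h1', h2', h3'⟩ := Nat.sInf_mem hne
    refine ⟨l', h1', ?_, h3'⟩
    rw [h2']; exact h
  · rintro ⟨l, h1, h2, h3⟩
    have h4 : wordNorm S g ≤ l.length := Nat.sInf_le ⟨l, h1, rfl, h3⟩
    exact h4.trans h2

lemma growthFn_eq {S : Set G} (hinv : S⁻¹ = S) (hcl : Subgroup.closure S = ⊤) (R : ℕ) :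
    growthFn S R = (gball S R).ncard := by
  unfold growthFn
  have : {g : G | wordNorm S g ≤ R} = gball S R := by
    ext g; exact wordNorm_le_iff hinv hcl g R
  rw [← this, ← Nat.card_coe_set_eq]
  rfl

lemma ncard_gball_pos {S : Set G} (hS : S.Finite) (R : ℕ) : 1 ≤ (gball S R).ncard := by
  rw [Nat.one_le_iff_ne_zero, Ne, Set.ncard_eq_zero (gball_finite hS R)]
  exact Set.Nonempty.ne_empty ⟨1, one_mem_gball S R⟩

lemma hasSubexp_iff {S : Set G} (hS : S.Finite) (hinv : S⁻¹ = S)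
    (hcl : Subgroup.closure S = ⊤) : HasSubexpGrowth S ↔ Sub S := by
  unfold HasSubexpGrowth
  simp only [growthFn_eq hinv hcl]
  constructor
  · intro h ε hε
    have h1 : ∀ᶠ R : ℕ in Filter.atTop,
        ((gball S R).ncard : ℝ) ^ ((R : ℝ)⁻¹) < Real.exp ε :=
      h.eventually (gt_mem_nhds (by simpa using hε))
    obtain ⟨N, hN⟩ := Filter.eventually_atTop.1 h1
    refine ⟨(gball S (N + 1)).ncard, fun r => ?_⟩
    have hone : (1 : ℝ) ≤ (gball S (N + 1)).ncard := by exact_mod_cast ncard_gball_pos hS _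
    rcases le_total r (N + 1) with hr | hr
    · have h2 : ((gball S r).ncard : ℝ) ≤ (gball S (N + 1)).ncard := by
        exact_mod_cast Set.ncard_le_ncard (gball_mono_r S hr) (gball_finite hS _)
      have h3 : (1 : ℝ) ≤ Real.exp (ε * r) := Real.one_le_exp (by positivity)
      nlinarith
    · have h2 := hN r (by omega)
      have hr0 : (0 : ℝ) < r := by
        have : 0 < r := by omega
        exact_mod_cast this
      have h3 : ((gball S r).ncard : ℝ) ≤ Real.exp (ε * r) := by
        have h4 : (((gball S r).ncard : ℝ) ^ ((r : ℝ)⁻¹)) ^ (r : ℝ) ≤ (Real.exp ε) ^ (r : ℝ) :=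
          Real.rpow_le_rpow (by positivity) h2.le hr0.le
        rw [← Real.rpow_mul (by positivity), inv_mul_cancel₀ hr0.ne', Real.rpow_one,
          ← Real.exp_mul] at h4
        exact h4
      have := Real.exp_pos (ε * r)
      nlinarith
  · intro h
    rw [tendsto_order]
    constructor
    · intro a ha
      refine Filter.Eventually.of_forall fun R => lt_of_lt_of_le ha ?_
      refine Real.one_le_rpow ?_ (by positivity)
      exact_mod_cast ncard_gball_pos hS R
    · intro a ha
      set ε := Real.log a / 2 with hεd
      have hla : 0 < Real.log a := Real.log_pos ha
      have hε : 0 < ε := by positivity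
      obtain ⟨K, hK⟩ := h ε hε
      have hK1 : 1 ≤ K := by
        have h1 := hK 0
        have h2 : (1 : ℝ) ≤ (gball S 0).ncard := by exact_mod_cast ncard_gball_pos hS _
        simp at h1
        linarith
      obtain ⟨N, hN⟩ := exists_nat_gt (Real.log K / ε)
      filter_upwards [Filter.eventually_ge_atTop (N + 1)] with R hR
      have hR0 : (0 : ℝ) < R := by
        have : 0 < R := by omega
        exact_mod_cast this
      have hNR : (N : ℝ) ≤ R := by
        have : N ≤ R := by omega
        exact_mod_cast this
      have h1 : ((gball S R).ncard : ℝ) < a ^ (R : ℝ) := by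
        refine (hK R).trans_lt ?_
        rw [Real.rpow_def_of_pos (by linarith), ← Real.exp_log (by linarith : 0 < K), ← Real.exp_add]
        rw [Real.exp_lt_exp]
        rw [div_lt_iff₀ hε] at hN
        have : Real.log a = 2 * ε := by rw [hεd]; ring
        rw [this]
        nlinarith
      calc ((gball S R).ncard : ℝ) ^ ((R : ℝ)⁻¹) < (a ^ (R : ℝ)) ^ ((R : ℝ)⁻¹) :=
            Real.rpow_lt_rpow (by positivity) h1 (by positivity)
        _ = a := by
          rw [← Real.rpow_mul (by linarith), mul_inv_cancel₀ hR0.ne', Real.rpow_one]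

lemma hasSubexp_closure_iff {F : Set G} (hF : F.Finite) (hinv : F⁻¹ = F) :
    HasSubexpGrowth {x : ↥(Subgroup.closure F) | (x : G) ∈ F} ↔ Sub F := by
  have himg : (Subgroup.closure F).subtype '' {x : ↥(Subgroup.closure F) | (x : G) ∈ F} = F := by
    ext g
    constructor
    · rintro ⟨x, hx, rfl⟩; exact hx
    · intro hg; exact ⟨⟨g, Subgroup.subset_closure hg⟩, hg, rfl⟩
  rw [hasSubexp_iff]
  · rw [← sub_image_iff (Subgroup.closure F).subtype Subtype.val_injective, himg]
  · exact Set.Finite.preimage (Subtype.val_injective.injOn) hF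
  · ext x
    have : (x : G)⁻¹ ∈ F ↔ (x : G) ∈ F := by
      rw [← Set.mem_inv, hinv]
    simpa using this
  · exact Subgroup.closure_closure_coe_preimage

end basics

/-- the easy direction -/
lemma easy_direction {B : Type*} [Group B] {W : Type*} [Group W] {S : Set W} (hS : S.Finite)
    (hinv : S⁻¹ = S) (hcl : Subgroup.closure S = ⊤) (hsub : Sub S) (φ : B →* W)
    (hφ : Function.Injective φ) : Countable B ∧ ∀ F : Set B, F.Finite → Sub F := by
  constructor
  · have : (Set.univ : Set W) = ⋃ r, gball S r := by
      ext g; simpa using exists_gball hinv hcl g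
    have h2 : (Set.univ : Set W).Countable := by
      rw [this]
      exact Set.countable_iUnion fun r => (gball_finite hS r).countable
    have : Countable W := Set.countable_univ_iff.1 h2
    exact hφ.countable
  · intro F hF
    rw [← sub_image_iff φ hφ]
    have : ∃ m, φ '' F ⊆ gball S m := by
      have hfin := hF.image φ
      generalize φ '' F = E at hfin
      induction E, hfin using Set.Finite.induction_on with
      | empty => exact ⟨0, by simp⟩
      | @insert a E _ _ ih =>
        obtain ⟨m, hm⟩ := ih
        obtain ⟨r, hr⟩ := exists_gball hinv hcl a
        refine ⟨max m r, ?_⟩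
        rintro x (rfl | hx)
        · exact gball_mono_r S (le_max_right _ _) hr
        · exact gball_mono_r S (le_max_left _ _) (hm hx)
    obtain ⟨m, hm⟩ := this
    exact Sub.of_subset_gball hS hm hsub

end SubexpEmb

namespace SubexpEmb
set_option linter.unusedSectionVars false

/-! ### The space and the basic permutations -/

abbrev Let5 := ZMod 5
abbrev VV := ZMod 5 × ZMod 5
abbrev YY (C : Type) := (ℕ → Let5) × C
abbrev PP (C : Type) := Equiv.Perm (YY C)

section spaces
variable {C : Type}

def consX (a : Let5) (x : ℕ → Let5) : ℕ → Let5
  | 0 => a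
  | n + 1 => x n

def cons (a : Let5) (y : YY C) : YY C := (consX a y.1, y.2)

@[simp] lemma consX_zero (a : Let5) (x : ℕ → Let5) : consX a x 0 = a := rfl
@[simp] lemma consX_succ (a : Let5) (x : ℕ → Let5) (n : ℕ) : consX a x (n + 1) = x n := rfl

lemma consX_eta (x : ℕ → Let5) : consX (x 0) (fun n => x (n + 1)) = x := by
  funext n; cases n <;> rfl

/-- head/tail decomposition -/
def EE : Let5 × YY C ≃ YY C where
  toFun p := cons p.1 p.2
  invFun y := (y.1 0, (fun n => y.1 (n + 1), y.2))
  left_inv p := rfl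
  right_inv y := by
    simp only [cons, consX_eta]

lemma exists_cons (y : YY C) : ∃ a y', y = cons a y' :=
  ⟨_, _, (EE.apply_symm_apply y).symm⟩

lemma cons_inj {a b : Let5} {y z : YY C} (h : cons a y = cons b z) : a = b ∧ y = z := by
  have : (a, y) = (b, z) := EE.injective h
  simpa using this

lemma perm_ext {f g : PP C} (h : ∀ a y, f (cons a y) = g (cons a y)) : f = g := by
  ext1 y
  obtain ⟨a, y', rfl⟩ := exists_cons y
  exact h a y'

def rot (a : Let5) : PP C :=
  EE.symm.trans (((Equiv.addRight a).prodCongr (Equiv.refl _)).trans EE)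

@[simp] lemma rot_cons (a b : Let5) (y : YY C) : rot a (cons b y) = cons (b + a) y := by
  have : EE.symm (cons b y) = (b, y) := rfl
  simp [rot, this]
  rfl

def Phi : (Let5 → PP C) →* PP C where
  toFun g := EE.symm.trans ((Equiv.prodShear (Equiv.refl _) g).trans EE)
  map_one' := by
    apply perm_ext; intro a y
    rfl
  map_mul' f g := by
    apply perm_ext; intro a y
    rfl

@[simp] lemma Phi_cons (g : Let5 → PP C) (b : Let5) (y : YY C) :
    Phi g (cons b y) = cons b (g b y) := rfl

lemma Phi_inj : Function.Injective (Phi (C := C)) := by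
  intro f g h
  funext a
  ext1 y
  have := congrArg (fun p : PP C => p (cons a y)) h
  exact (cons_inj this).2

@[simp] lemma rot_zero : (rot 0 : PP C) = 1 := by
  apply perm_ext; intro a y; simp

lemma rot_mul (a b : Let5) : (rot a * rot b : PP C) = rot (a + b) := by
  apply perm_ext; intro a y; simp [add_comm, add_left_comm]

lemma rot_inv (a : Let5) : (rot a : PP C)⁻¹ = rot (-a) := by
  rw [inv_eq_iff_mul_eq_one, rot_mul]; simp

lemma rot_Phi (a : Let5) (g : Let5 → PP C) :
    rot a * Phi g = Phi (fun i => g (i - a)) * rot a := by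
  apply perm_ext; intro b y; simp

lemma Phi_rot_Phi (g D : Let5 → PP C) (s : Let5) :
    Phi g * rot s * Phi D = Phi (fun i => g i * D (i - s)) * rot s := by
  rw [mul_assoc, rot_Phi, ← mul_assoc, ← map_mul]; rfl

def all4 (y : YY C) : Prop := ∀ n, y.1 n = 4

lemma all4_cons (a : Let5) (y : YY C) : all4 (cons a y) ↔ a = 4 ∧ all4 y := by
  constructor
  · intro h
    exact ⟨h 0, fun n => h (n + 1)⟩
  · rintro ⟨h, h'⟩ n
    cases n with
    | zero => exact h
    | succ n => exact h' n

/-- induction on the position of the first letter different from 4 -/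
lemma y_induction {p : ℕ → YY C → Prop} (h4 : ∀ k y, all4 y → p k y)
    (hne : ∀ k a y, a ≠ 4 → p k (cons a y)) (hc : ∀ k y, p (k + 1) y → p k (cons 4 y)) :
    ∀ k y, p k y := by
  intro k y
  by_cases H : all4 y
  · exact h4 k y H
  · have : ∃ n, y.1 n ≠ 4 := by
      by_contra hh
      push Not at hh
      exact H hh
    obtain ⟨n, hn⟩ := this
    clear H
    induction n generalizing k y with
    | zero =>
      obtain ⟨a, y, rfl⟩ := exists_cons y
      exact hne k a y hn
    | succ n ih =>
      obtain ⟨a, y, rfl⟩ := exists_cons y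
      by_cases ha : a = 4
      · subst ha
        exact hc k y (ih (k + 1) y hn)
      · exact hne k a y ha

variable [Group C]

open Classical in
noncomputable def delF (h : C) (y : YY C) : YY C := if all4 y then (y.1, h * y.2) else y

lemma delF_all4 (h : C) (y : YY C) (hy : all4 y) : delF h y = (y.1, h * y.2) := if_pos hy
lemma delF_not (h : C) (y : YY C) (hy : ¬ all4 y) : delF h y = y := if_neg hy

lemma delF_mul (h h' : C) (y : YY C) : delF h (delF h' y) = delF (h * h') y := by
  by_cases hy : all4 y
  · have h2 : all4 ((y.1, h' * y.2) : YY C) := hy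
    rw [delF_all4 _ _ hy, delF_all4 _ _ hy, delF_all4 _ _ h2, mul_assoc]
  · rw [delF_not _ _ hy, delF_not _ _ hy, delF_not _ _ hy]

lemma delF_one (y : YY C) : delF (1 : C) y = y := by
  by_cases hy : all4 y
  · rw [delF_all4 _ _ hy, one_mul]
  · rw [delF_not _ _ hy]

noncomputable def del : C →* PP C where
  toFun h := ⟨delF h, delF h⁻¹, fun y => by rw [delF_mul, inv_mul_cancel, delF_one],
    fun y => by rw [delF_mul, mul_inv_cancel, delF_one]⟩
  map_one' := by ext1 y; exact delF_one y
  map_mul' h h' := by ext1 y; exact (delF_mul h h' y).symm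

lemma del_apply (h : C) (y : YY C) : del h y = delF h y := rfl

lemma del_inj : Function.Injective (del (C := C)) := by
  intro h h' hh
  have := congrArg (fun p : PP C => p (fun _ => 4, 1)) hh
  simp only [del_apply] at this
  have ha : all4 ((fun _ => 4, 1) : YY C) := fun n => rfl
  rw [delF_all4 _ _ ha, delF_all4 _ _ ha] at this
  simpa using this

def om (k : ℕ) (v : VV) : Let5 := if k % 6 = 5 then v.2 else v.1 + ((k % 6 : ℕ) : ZMod 5) * v.2

lemma om_add (k : ℕ) (v v' : VV) : om k (v + v') = om k v + om k v' := by
  unfold om; split_ifs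
  · simp
  · simp; ring

lemma om_zero (k : ℕ) : om k 0 = 0 := by unfold om; simp

variable (c : ℕ → C × C)

open Classical in
/-- the directed elements -/
noncomputable def dirF (k : ℕ) (v : VV) (e : ℤ) (h : C) (y : YY C) : YY C :=
  if H : ∃ n, y.1 n ≠ 4 then
    if y.1 (Nat.find H) = 0 then
      (Function.update y.1 (Nat.find H + 1) (y.1 (Nat.find H + 1) + om (k + Nat.find H) v), y.2)
    else if y.1 (Nat.find H) = 1 ∧ ∀ m, Nat.find H < m → y.1 m = 4 then
      (y.1, (c (k + Nat.find H)).1 ^ e * y.2)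
    else if y.1 (Nat.find H) = 2 ∧ ∀ m, Nat.find H < m → y.1 m = 4 then
      (y.1, (c (k + Nat.find H)).2 ^ e * y.2)
    else y
  else (y.1, h * y.2)

lemma dirF_all4 (k : ℕ) (v : VV) (e : ℤ) (h : C) (y : YY C) (hy : all4 y) :
    dirF c k v e h y = (y.1, h * y.2) := by
  unfold dirF
  rw [dif_neg]
  push Not; exact hy

lemma find_cons_ne {a : Let5} (ha : a ≠ 4) (y : YY C) [DecidablePred fun n => (cons a y).1 n ≠ 4]
    (H : ∃ n, (cons a y).1 n ≠ 4) :
    Nat.find H = 0 := by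
  rw [Nat.find_eq_zero]; exact ha

lemma dirF_cons0 (k : ℕ) (v : VV) (e : ℤ) (h : C) (y : YY C) :
    dirF c k v e h (cons 0 y) = cons 0 (rot (om k v) y) := by
  have hne : (0 : Let5) ≠ 4 := by decide
  have H : ∃ n, (cons 0 y).1 n ≠ 4 := ⟨0, hne⟩
  unfold dirF
  rw [dif_pos H, find_cons_ne hne y H, if_pos (show (cons 0 y).1 0 = 0 from rfl)]
  obtain ⟨b, y, rfl⟩ := exists_cons y
  rw [rot_cons]
  refine Prod.ext ?_ rfl
  funext n
  rcases n with _ | _ | n <;> simp [cons, Function.update]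

lemma tail_all4 (a : Let5) (y : YY C) : (∀ m, 0 < m → (cons a y).1 m = 4) ↔ all4 y := by
  constructor
  · intro h n; exact h (n + 1) (by omega)
  · intro h m hm
    obtain ⟨n, rfl⟩ : ∃ n, m = n + 1 := ⟨m - 1, by omega⟩
    exact h n

lemma dirF_cons1 (k : ℕ) (v : VV) (e : ℤ) (h : C) (y : YY C) :
    dirF c k v e h (cons 1 y) = cons 1 (del ((c k).1 ^ e) y) := by
  have hne : (1 : Let5) ≠ 4 := by decide
  have h10 : (1 : Let5) ≠ 0 := by decide
  have h12 : (1 : Let5) ≠ 2 := by decide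
  have H : ∃ n, (cons 1 y).1 n ≠ 4 := ⟨0, hne⟩
  have e1 : (cons 1 y).1 0 = 1 := rfl
  unfold dirF
  rw [dif_pos H, find_cons_ne hne y H, tail_all4, e1, if_neg h10, del_apply]
  by_cases hy : all4 y
  · rw [if_pos ⟨rfl, hy⟩, delF_all4 _ _ hy]; rfl
  · rw [if_neg (fun h => hy h.2), if_neg (fun h => hy h.2), delF_not _ _ hy]

lemma dirF_cons2 (k : ℕ) (v : VV) (e : ℤ) (h : C) (y : YY C) :
    dirF c k v e h (cons 2 y) = cons 2 (del ((c k).2 ^ e) y) := by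
  have hne : (2 : Let5) ≠ 4 := by decide
  have h10 : (2 : Let5) ≠ 0 := by decide
  have h12 : (2 : Let5) ≠ 1 := by decide
  have H : ∃ n, (cons 2 y).1 n ≠ 4 := ⟨0, hne⟩
  have e1 : (cons 2 y).1 0 = 2 := rfl
  unfold dirF
  rw [dif_pos H, find_cons_ne hne y H, tail_all4, e1, if_neg h10, del_apply,
    if_neg (fun h => h12 h.1)]
  by_cases hy : all4 y
  · rw [if_pos ⟨rfl, hy⟩, delF_all4 _ _ hy]; rfl
  · rw [if_neg (fun h => hy h.2), delF_not _ _ hy]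

lemma dirF_cons3 (k : ℕ) (v : VV) (e : ℤ) (h : C) (y : YY C) :
    dirF c k v e h (cons 3 y) = cons 3 y := by
  have hne : (3 : Let5) ≠ 4 := by decide
  have h10 : (3 : Let5) ≠ 0 := by decide
  have h1 : (3 : Let5) ≠ 1 := by decide
  have h2 : (3 : Let5) ≠ 2 := by decide
  have H : ∃ n, (cons 3 y).1 n ≠ 4 := ⟨0, hne⟩
  have e1 : (cons 3 y).1 0 = 3 := rfl
  unfold dirF
  rw [dif_pos H, find_cons_ne hne y H, e1, if_neg h10, if_neg (fun h => h1 h.1),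
    if_neg (fun h => h2 h.1)]

lemma dirF_cons4 (k : ℕ) (v : VV) (e : ℤ) (h : C) (y : YY C) :
    dirF c k v e h (cons 4 y) = cons 4 (dirF c (k + 1) v e h y) := by
  classical
  by_cases hy : all4 y
  · rw [dirF_all4 _ _ _ _ _ _ hy, dirF_all4 _ _ _ _ _ _ ((all4_cons _ _).2 ⟨rfl, hy⟩)]
    rfl
  · have H : ∃ n, y.1 n ≠ 4 := by
      by_contra hh; push Not at hh; exact hy hh
    have H' : ∃ n, (cons 4 y).1 n ≠ 4 := by
      obtain ⟨n, hn⟩ := H; exact ⟨n + 1, hn⟩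
    have hf : Nat.find H' = Nat.find H + 1 := by
      rw [Nat.find_eq_iff]
      refine ⟨Nat.find_spec H, ?_⟩
      intro n hn
      cases n with
      | zero => simp [cons]
      | succ n => exact Nat.find_min H (by omega)
    have ht : (∀ m, Nat.find H + 1 < m → (cons 4 y).1 m = 4) ↔ (∀ m, Nat.find H < m → y.1 m = 4) := by
      constructor
      · intro h m hm; exact h (m + 1) (by omega)
      · intro h m hm
        obtain ⟨n, rfl⟩ : ∃ n, m = n + 1 := ⟨m - 1, by omega⟩
        exact h n (by omega)
    have hk : k + (Nat.find H + 1) = k + 1 + Nat.find H := by ring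
    have hx : ∀ n, (cons 4 y).1 (n + 1) = y.1 n := fun n => rfl
    unfold dirF
    rw [dif_pos H, dif_pos H']
    simp only [hf, ht, hk, hx]
    split_ifs
    · refine Prod.ext ?_ rfl
      funext n
      cases n <;> simp [cons, Function.update]
    · rfl
    · rfl
    · rfl

lemma let5_cases (a : Let5) : a = 0 ∨ a = 1 ∨ a = 2 ∨ a = 3 ∨ a = 4 := by
  revert a; decide

lemma dirF_mul (k : ℕ) (v v' : VV) (e e' : ℤ) (h h' : C) (y : YY C) :
    dirF c k v e h (dirF c k v' e' h' y) = dirF c k (v + v') (e + e') (h * h') y := by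
  refine y_induction (p := fun k y => dirF c k v e h (dirF c k v' e' h' y) =
    dirF c k (v + v') (e + e') (h * h') y) ?_ ?_ ?_ k y
  · intro k y hy
    have : all4 (dirF c k v' e' h' y) := by rw [dirF_all4 _ _ _ _ _ _ hy]; exact hy
    rw [dirF_all4 _ _ _ _ _ _ this, dirF_all4 _ _ _ _ _ _ hy, dirF_all4 _ _ _ _ _ _ hy, mul_assoc]
  · intro k a y ha
    rcases let5_cases a with rfl | rfl | rfl | rfl | rfl
    · simp only [dirF_cons0, om_add]
      rw [← Equiv.Perm.mul_apply, rot_mul]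
    · simp only [dirF_cons1, zpow_add, map_mul, Equiv.Perm.mul_apply]
    · simp only [dirF_cons2, zpow_add, map_mul, Equiv.Perm.mul_apply]
    · simp only [dirF_cons3]
    · exact absurd rfl ha
  · intro k y hy
    simp only [dirF_cons4, hy]

lemma dirF_zero (k : ℕ) (h : C) (y : YY C) : dirF c k 0 0 h y = delF h y := by
  refine y_induction (p := fun k y => dirF c k 0 0 h y = delF h y) ?_ ?_ ?_ k y
  · intro k y hy
    rw [dirF_all4 _ _ _ _ _ _ hy, delF_all4 _ _ hy]
  · intro k a y ha
    have hn : ¬ all4 (cons a y) := fun h => ha ((all4_cons _ _).1 h).1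
    rw [delF_not _ _ hn]
    rcases let5_cases a with rfl | rfl | rfl | rfl | rfl
    · simp [dirF_cons0, om_zero]
    · simp [dirF_cons1]
    · simp [dirF_cons2]
    · simp only [dirF_cons3]
    · exact absurd rfl ha
  · intro k y hy
    rw [dirF_cons4, hy]
    by_cases h4 : all4 y
    · rw [delF_all4 _ _ h4, delF_all4 _ _ ((all4_cons _ _).2 ⟨rfl, h4⟩)]; rfl
    · rw [delF_not _ _ h4, delF_not _ _ (fun h => h4 ((all4_cons _ _).1 h).2)]

noncomputable def dir (k : ℕ) (v : VV) (e : ℤ) (h : C) : PP C :=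
  ⟨dirF c k v e h, dirF c k (-v) (-e) h⁻¹,
    fun y => by rw [dirF_mul, neg_add_cancel, neg_add_cancel, inv_mul_cancel, dirF_zero, delF_one],
    fun y => by rw [dirF_mul, add_neg_cancel, add_neg_cancel, mul_inv_cancel, dirF_zero, delF_one]⟩

lemma dir_apply (k : ℕ) (v : VV) (e : ℤ) (h : C) (y : YY C) : dir c k v e h y = dirF c k v e h y := rfl

lemma dir_mul (k : ℕ) (v v' : VV) (e e' : ℤ) (h h' : C) :
    dir c k v e h * dir c k v' e' h' = dir c k (v + v') (e + e') (h * h') := by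
  ext1 y; exact dirF_mul c k v v' e e' h h' y

lemma dir_zero (k : ℕ) (h : C) : dir c k 0 0 h = del h := by
  ext1 y; exact dirF_zero c k h y

lemma dir_one (k : ℕ) : dir c k 0 0 1 = 1 := by
  rw [dir_zero, map_one]

lemma dir_inv (k : ℕ) (v : VV) (e : ℤ) (h : C) : (dir c k v e h)⁻¹ = dir c k (-v) (-e) h⁻¹ := by
  rw [inv_eq_iff_mul_eq_one, dir_mul]; simp [dir_one]

/-- components of a directed element -/
noncomputable def comp (k : ℕ) (v : VV) (e : ℤ) (h : C) : Let5 → PP C := fun a =>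
  if a = 0 then rot (om k v) else if a = 1 then del ((c k).1 ^ e)
  else if a = 2 then del ((c k).2 ^ e) else if a = 3 then 1 else dir c (k + 1) v e h

lemma comp0 (k : ℕ) (v : VV) (e : ℤ) (h : C) : comp c k v e h 0 = rot (om k v) := by
  simp [comp]
lemma comp1 (k : ℕ) (v : VV) (e : ℤ) (h : C) : comp c k v e h 1 = del ((c k).1 ^ e) := by
  simp [comp, show (1 : Let5) ≠ 0 by decide]
lemma comp2 (k : ℕ) (v : VV) (e : ℤ) (h : C) : comp c k v e h 2 = del ((c k).2 ^ e) := by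
  simp [comp, show (2 : Let5) ≠ 0 by decide, show (2 : Let5) ≠ 1 by decide]
lemma comp3 (k : ℕ) (v : VV) (e : ℤ) (h : C) : comp c k v e h 3 = 1 := by
  simp [comp, show (3 : Let5) ≠ 0 by decide, show (3 : Let5) ≠ 1 by decide,
    show (3 : Let5) ≠ 2 by decide]
lemma comp4 (k : ℕ) (v : VV) (e : ℤ) (h : C) : comp c k v e h 4 = dir c (k + 1) v e h := by
  simp [comp, show (4 : Let5) ≠ 0 by decide, show (4 : Let5) ≠ 1 by decide,
    show (4 : Let5) ≠ 2 by decide, show (4 : Let5) ≠ 3 by decide]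

lemma dir_eq_Phi (k : ℕ) (v : VV) (e : ℤ) (h : C) :
    dir c k v e h = Phi (comp c k v e h) := by
  apply perm_ext; intro a y
  rw [dir_apply, Phi_cons]
  rcases let5_cases a with rfl | rfl | rfl | rfl | rfl
  · rw [dirF_cons0, comp0]
  · rw [dirF_cons1, comp1]
  · rw [dirF_cons2, comp2]
  · rw [dirF_cons3, comp3]; rfl
  · rw [dirF_cons4, comp4]; rfl

end spaces
end SubexpEmb

namespace SubexpEmb
set_option linter.unusedSectionVars false

/-! ### Weights -/

def nrm (k : ℕ) (v : VV) : ℕ :=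
  if v = 0 then 0 else if om k v = 0 then 50 else if om (k + 1) v = 0 then 56
  else if om (k + 2) v = 0 then 62 else if om (k + 3) v = 0 then 68
  else if om (k + 4) v = 0 then 75 else 82

lemma om_mod (k t : ℕ) (v : VV) : om (k % 6 + t) v = om (k + t) v := by
  unfold om
  rw [Nat.mod_add_mod]

lemma nrm_mod (k t : ℕ) (v : VV) : nrm (k % 6 + t) v = nrm (k + t) v := by
  unfold nrm
  simp only [om_mod, add_assoc]

set_option maxRecDepth 100000 in
lemma nrm_fact_aux : ∀ (j : Fin 6) (v : VV),
    20 * (nrm (j.1 + 1) v + if om (j.1 + 0) v = 0 then 0 else 50) ≤ 19 * (50 + nrm (j.1 + 0) v) := by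
  decide

lemma nrm_fact (k : ℕ) (v : VV) :
    20 * (nrm (k + 1) v + if om k v = 0 then 0 else 50) ≤ 19 * (50 + nrm k v) := by
  have := nrm_fact_aux ⟨k % 6, Nat.mod_lt _ (by norm_num)⟩ v
  simp only [om_mod, nrm_mod] at this
  exact this

lemma nrm_zero (k : ℕ) : nrm k 0 = 0 := by simp [nrm]

lemma nrm_le (k : ℕ) (v : VV) : nrm k v ≤ 82 := by
  unfold nrm; split_ifs <;> norm_num

lemma le_nrm (k : ℕ) {v : VV} (hv : v ≠ 0) : 50 ≤ nrm k v := by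
  unfold nrm; rw [if_neg hv]; split_ifs <;> norm_num

lemma nrm_add (k : ℕ) (v v' : VV) : nrm k (v + v') ≤ nrm k v + nrm k v' := by
  by_cases hv : v = 0
  · simp [hv]
  by_cases hv' : v' = 0
  · simp [hv']
  have := nrm_le k (v + v')
  have := le_nrm k hv
  have := le_nrm k hv'
  omega

lemma sum_let5 (f : Let5 → ℝ) : ∑ i, f i = f 0 + f 1 + f 2 + f 3 + f 4 :=
  Fin.sum_univ_five f

section words
variable {C : Type} [Group C] (c : ℕ → C × C)

def gens (k : ℕ) : Set C :=
  {x | ∃ i < k, x = (c i).1 ∨ x = (c i).1⁻¹ ∨ x = (c i).2 ∨ x = (c i).2⁻¹}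

lemma gens_mono {k k' : ℕ} (h : k ≤ k') : gens c k ⊆ gens c k' := by
  rintro x ⟨i, hi, hx⟩; exact ⟨i, by omega, hx⟩

structure Syl (C : Type) where
  a : Let5
  v : VV
  e : ℤ
  h : C
  r : ℕ

def Syl.valid (k : ℕ) (s : Syl C) : Prop := s.h ∈ gball (gens c k) s.r

def Syl.cost (k : ℕ) (la mu nu : ℝ) (s : Syl C) : ℝ :=
  la * (50 + nrm k s.v) + mu * |(s.e : ℝ)| + nu * s.r

noncomputable def evl (k : ℕ) : List (Syl C) → PP C
  | [] => 1
  | s :: l => evl k l * (rot s.a * dir c k s.v s.e s.h)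

def lcost (k : ℕ) (la mu nu : ℝ) (l : List (Syl C)) : ℝ := (l.map (Syl.cost k la mu nu)).sum

def Rep (k : ℕ) (la mu nu : ℝ) (g : PP C) (t : ℝ) : Prop :=
  ∃ l : List (Syl C), l ≠ [] ∧ (∀ s ∈ l, Syl.valid c k s) ∧ evl c k l = g ∧ lcost k la mu nu l ≤ t

variable {k : ℕ} {la mu nu : ℝ}

lemma Rep.mono {g : PP C} {t t' : ℝ} (h : Rep c k la mu nu g t) (ht : t ≤ t') :
    Rep c k la mu nu g t' := by
  obtain ⟨l, h1, h2, h3, h4⟩ := h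
  exact ⟨l, h1, h2, h3, h4.trans ht⟩

lemma Rep.one : Rep c k la mu nu 1 (50 * la) := by
  refine ⟨[⟨0, 0, 0, 1, 0⟩], by simp, ?_, ?_, ?_⟩
  · simp [Syl.valid, one_mem_gball]
  · simp [evl, dir_one]
  · simp [lcost, Syl.cost, nrm_zero]; linarith

lemma Rep.mul_rot {g : PP C} {t : ℝ} (h : Rep c k la mu nu g t) (a : Let5) :
    Rep c k la mu nu (g * rot a) (t + if a = 0 then 0 else 50 * la) := by
  by_cases ha : a = 0
  · simpa [ha] using h
  obtain ⟨l, h1, h2, h3, h4⟩ := h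
  refine ⟨⟨a, 0, 0, 1, 0⟩ :: l, by simp, ?_, ?_, ?_⟩
  · intro s hs
    rcases List.mem_cons.1 hs with rfl | hs
    · exact one_mem_gball _ _
    · exact h2 s hs
  · simp [evl, dir_one, h3]
  · simp only [lcost, List.map_cons, List.sum_cons, if_neg ha] at h4 ⊢
    simp [Syl.cost, nrm_zero]
    linarith

lemma Rep.mul_dir (hla : 0 ≤ la) (hmu : 0 ≤ mu) {g : PP C} {t : ℝ}
    (h : Rep c k la mu nu g t) (v : VV) (e : ℤ) (x : C) (r : ℕ) (hx : x ∈ gball (gens c k) r) :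
    Rep c k la mu nu (g * dir c k v e x) (t + (la * nrm k v + mu * |(e : ℝ)| + nu * r)) := by
  obtain ⟨l, h1, h2, h3, h4⟩ := h
  obtain ⟨s, l, rfl⟩ := List.exists_cons_of_ne_nil h1
  refine ⟨⟨s.a, s.v + v, s.e + e, s.h * x, s.r + r⟩ :: l, by simp, ?_, ?_, ?_⟩
  · intro s' hs
    rcases List.mem_cons.1 hs with rfl | hs
    · exact mul_mem_gball (h2 s (by simp)) hx
    · exact h2 s' (by simp [hs])
  · rw [← h3]
    simp only [evl, mul_assoc, dir_mul]
  · simp only [lcost, List.map_cons, List.sum_cons] at h4 ⊢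
    simp only [Syl.cost] at h4 ⊢
    push_cast
    have e1 : ((nrm k (s.v + v) : ℕ) : ℝ) ≤ nrm k s.v + nrm k v := by exact_mod_cast nrm_add k s.v v
    have e2 : |(s.e : ℝ) + e| ≤ |(s.e : ℝ)| + |(e : ℝ)| := abs_add_le _ _
    have e3 := mul_le_mul_of_nonneg_left e1 hla
    have e4 := mul_le_mul_of_nonneg_left e2 hmu
    linarith

open Classical in
noncomputable def sp (k : ℕ) : ℝ := if c k = 1 then 0 else 1

lemma sp_nonneg (k : ℕ) : 0 ≤ sp c k := by unfold sp; split_ifs <;> norm_num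

lemma Rep.mul_del (hla : 0 ≤ la) (hmu : 0 ≤ mu) {g : PP C} {t : ℝ}
    (h : Rep c (k + 1) la mu nu g t) (x : C) (hx : x = (c k).1 ∨ x = (c k).2) (e : ℤ) :
    Rep c (k + 1) la mu nu (g * del (x ^ e)) (t + nu * sp c k * |(e : ℝ)|) := by
  unfold sp
  split_ifs with hc
  · have : x = 1 := by rcases hx with rfl | rfl <;> simp [hc]
    simpa [this] using h
  · have hm : x ^ e ∈ gball (gens c (k + 1)) e.natAbs := by
      apply zpow_mem_gball
      · rcases hx with rfl | rfl
        · exact ⟨k, by omega, by simp⟩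
        · exact ⟨k, by omega, by simp⟩
      · rcases hx with rfl | rfl
        · exact ⟨k, by omega, by simp⟩
        · exact ⟨k, by omega, by simp⟩
    have := h.mul_dir c hla hmu 0 0 _ _ hm
    rw [dir_zero] at this
    refine this.mono c ?_
    simp only [nrm_zero, Nat.cast_natAbs, Int.cast_abs]
    simp

lemma step_lemma (hla : 0 ≤ la) (hmu : 0 ≤ mu) (l : List (Syl C)) (hl : ∀ s ∈ l, Syl.valid c k s) :
    ∃ (g : Let5 → PP C) (s : Let5) (t : Let5 → ℝ), evl c k l = Phi g * rot s ∧
      (∀ i, Rep c (k + 1) la mu nu (g i) (t i)) ∧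
      ∑ i, t i ≤ lcost k (19 / 20 * la) (mu + 2 * nu * sp c k) nu l + 250 * la := by
  induction l with
  | nil =>
    refine ⟨1, 0, fun _ => 50 * la, ?_, ?_, ?_⟩
    · simp [evl]
    · intro i; exact Rep.one c
    · rw [sum_let5]; simp [lcost]; linarith
  | cons w l ih =>
    obtain ⟨g, s, t, h1, h2, h3⟩ := ih fun x hx => hl x (by simp [hx])
    have hw := hl w (by simp)
    let inc : Let5 → ℝ := fun i =>
      if i = 0 then (if om k w.v = 0 then 0 else 50 * la)
      else if i = 1 then nu * sp c k * |(w.e : ℝ)|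
      else if i = 2 then nu * sp c k * |(w.e : ℝ)|
      else if i = 3 then 0
      else la * nrm (k + 1) w.v + mu * |(w.e : ℝ)| + nu * w.r
    have i0 : inc 0 = if om k w.v = 0 then 0 else 50 * la := by simp [inc]
    have i1 : inc 1 = nu * sp c k * |(w.e : ℝ)| := by
      simp only [inc]
      rw [if_neg (by decide), if_pos trivial]
    have i2 : inc 2 = nu * sp c k * |(w.e : ℝ)| := by
      simp only [inc]
      rw [if_neg (by decide), if_neg (by decide), if_pos trivial]
    have i3 : inc 3 = 0 := by
      simp only [inc]
      rw [if_neg (by decide), if_neg (by decide), if_neg (by decide), if_pos trivial]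
    have i4 : inc 4 = la * nrm (k + 1) w.v + mu * |(w.e : ℝ)| + nu * w.r := by
      simp only [inc]
      rw [if_neg (by decide), if_neg (by decide), if_neg (by decide), if_neg (by decide)]
    refine ⟨fun i => g i * comp c k w.v w.e w.h (i - (s + w.a)), s + w.a,
      fun i => t i + inc (i - (s + w.a)), ?_, ?_, ?_⟩
    · rw [evl, h1, dir_eq_Phi, ← Phi_rot_Phi, ← rot_mul]
      simp only [mul_assoc]
    · intro i
      have hi := h2 i
      simp only
      generalize i - (s + w.a) = j
      rcases let5_cases j with rfl | rfl | rfl | rfl | rfl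
      · rw [comp0, i0]
        exact hi.mul_rot c _
      · rw [comp1, i1]
        exact hi.mul_del c hla hmu _ (Or.inl rfl) _
      · rw [comp2, i2]
        exact hi.mul_del c hla hmu _ (Or.inr rfl) _
      · rw [comp3, i3]; simpa using hi
      · rw [comp4, i4]
        exact hi.mul_dir c hla hmu _ _ _ _ (gball_mono (gens_mono c (by omega)) _ hw)
    · have e1 : ∑ i, inc (i - (s + w.a)) = ∑ i, inc i :=
        Equiv.sum_comp (Equiv.subRight (s + w.a)) inc
      rw [Finset.sum_add_distrib, e1, sum_let5 inc, i0, i1, i2, i3, i4]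
      have e2 : la * nrm (k + 1) w.v + (if om k w.v = 0 then 0 else 50 * la)
          ≤ 19 / 20 * la * (50 + nrm k w.v) := by
        have := nrm_fact k w.v
        have h20 : (20 : ℝ) * (nrm (k + 1) w.v + if om k w.v = 0 then 0 else 50) ≤
            19 * (50 + nrm k w.v) := by exact_mod_cast this
        have := mul_le_mul_of_nonneg_left h20 hla
        split_ifs at this ⊢ <;> linarith
      simp only [lcost, List.map_cons, List.sum_cons] at h3 ⊢
      simp only [Syl.cost] at h3 ⊢
      linarith

end words
end SubexpEmb

namespace SubexpEmb
set_option linter.unusedSectionVars false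

section counting
variable {C : Type} [Group C] (c : ℕ → C × C)

def Zbd (k : ℕ) (la mu nu M : ℝ) : Prop :=
  ∀ (F : Finset (PP C)) (t : PP C → ℝ), (∀ g ∈ F, Rep c k la mu nu g (t g)) →
    ∑ g ∈ F, Real.exp (-t g) ≤ M

lemma Zbd.nonneg {k : ℕ} {la mu nu M : ℝ} (h : Zbd c k la mu nu M) : 0 ≤ M := by
  have := h ∅ (fun _ => 0) (by simp)
  simpa using this

lemma Zbd.step {k : ℕ} {la mu nu M : ℝ} (hla : 0 ≤ la) (hmu : 0 ≤ mu)
    (h : Zbd c (k + 1) la mu nu M) :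
    Zbd c k (19 / 20 * la) (mu + 2 * nu * sp c k) nu (5 * (Real.exp (250 * la) * M ^ 5)) := by
  classical
  intro F t hF
  have hdec : ∀ g : PP C, ∃ (q : Let5 → PP C) (s : Let5) (τ : Let5 → ℝ), g ∈ F →
      (g = Phi q * rot s ∧ (∀ i, Rep c (k + 1) la mu nu (q i) (τ i)) ∧
        ∑ i, τ i ≤ t g + 250 * la) := by
    intro g
    by_cases hg : g ∈ F
    · obtain ⟨l, h1, h2, h3, h4⟩ := hF g hg
      obtain ⟨q, s, τ, h5, h6, h7⟩ := step_lemma c (nu := nu) hla hmu l h2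
      exact ⟨q, s, τ, fun _ => ⟨by rw [← h3, h5], h6, by linarith⟩⟩
    · exact ⟨1, 0, 0, fun h => absurd h hg⟩
  choose q s τ hq using hdec
  let U : Finset (PP C) := F.biUnion fun g => Finset.univ.image (q g)
  have hmin : ∀ u : PP C, ∃ t' : ℝ, u ∈ U → (Rep c (k + 1) la mu nu u t' ∧
      ∀ g ∈ F, ∀ i, q g i = u → t' ≤ τ g i) := by
    intro u
    by_cases hu : u ∈ U
    · have hne : ((F ×ˢ (Finset.univ : Finset Let5)).filter fun p => q p.1 p.2 = u).Nonempty := by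
        obtain ⟨g, hg, hgu⟩ := Finset.mem_biUnion.1 hu
        obtain ⟨i, _, hi⟩ := Finset.mem_image.1 hgu
        exact ⟨(g, i), by simp [hg, hi]⟩
      obtain ⟨p, hp, hpm⟩ := Finset.exists_min_image _ (fun p : PP C × Let5 => τ p.1 p.2) hne
      simp only [Finset.mem_filter, Finset.mem_product, Finset.mem_univ, and_true] at hp hpm
      refine ⟨τ p.1 p.2, fun _ => ⟨?_, ?_⟩⟩
      · rw [← hp.2]; exact (hq p.1 hp.1).2.1 p.2
      · intro g hg i hi
        exact hpm (g, i) ⟨hg, hi⟩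
    · exact ⟨0, fun h => absurd h hu⟩
  choose ts hts using hmin
  have hU := h U ts (fun u hu => (hts u hu).1)
  have hmemU : ∀ g ∈ F, ∀ i, q g i ∈ U := by
    intro g hg i
    exact Finset.mem_biUnion.2 ⟨g, hg, Finset.mem_image_of_mem _ (Finset.mem_univ i)⟩
  have hterm : ∀ g ∈ F, Real.exp (-t g) ≤
      Real.exp (250 * la) * ∏ i, Real.exp (-ts (q g i)) := by
    intro g hg
    rw [← Real.exp_sum, ← Real.exp_add, Real.exp_le_exp, Finset.sum_neg_distrib]
    have h1 := (hq g hg).2.2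
    have h2 : ∑ i, ts (q g i) ≤ ∑ i, τ g i :=
      Finset.sum_le_sum fun i _ => (hts _ (hmemU g hg i)).2 g hg i rfl
    linarith
  have hinj : Set.InjOn (fun g => (s g, q g)) (F : Set (PP C)) := by
    intro g hg g' hg' he
    simp only [Prod.mk.injEq] at he
    rw [(hq g hg).1, (hq g' hg').1, he.1, he.2]
  calc ∑ g ∈ F, Real.exp (-t g)
      ≤ ∑ g ∈ F, Real.exp (250 * la) * ∏ i, Real.exp (-ts (q g i)) := Finset.sum_le_sum hterm
    _ = ∑ p ∈ F.image (fun g => (s g, q g)), Real.exp (250 * la) * ∏ i, Real.exp (-ts (p.2 i)) := by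
        rw [Finset.sum_image hinj]
    _ ≤ ∑ p ∈ (Finset.univ : Finset Let5) ×ˢ Fintype.piFinset (fun _ : Let5 => U),
          Real.exp (250 * la) * ∏ i, Real.exp (-ts (p.2 i)) := by
        refine Finset.sum_le_sum_of_subset_of_nonneg ?_ ?_
        · intro p hp
          obtain ⟨g, hg, rfl⟩ := Finset.mem_image.1 hp
          simp only [Finset.mem_product, Finset.mem_univ, true_and, Fintype.mem_piFinset]
          exact hmemU g hg
        · intro p _ _
          exact mul_nonneg (Real.exp_pos _).le (Finset.prod_nonneg fun i _ => (Real.exp_pos _).le)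
    _ = 5 * (Real.exp (250 * la) * (∑ u ∈ U, Real.exp (-ts u)) ^ 5) := by
        rw [Finset.sum_product]
        simp only [← Finset.mul_sum]
        rw [← Finset.prod_univ_sum (fun _ : Let5 => U) (fun _ u => Real.exp (-ts u))]
        simp [Finset.prod_const]
        ring
    _ ≤ 5 * (Real.exp (250 * la) * M ^ 5) := by
        have h0 : 0 ≤ ∑ u ∈ U, Real.exp (-ts u) := Finset.sum_nonneg fun i _ => (Real.exp_pos _).le
        have := pow_le_pow_left₀ h0 hU 5
        have := mul_le_mul_of_nonneg_left this (Real.exp_pos (250 * la)).le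
        linarith

lemma Zbd.iterate {nu : ℝ} (hnu : 0 ≤ nu) (K : ℕ) : ∀ {la mu M : ℝ}, 0 ≤ la → 0 ≤ mu →
    Zbd c K la mu nu M →
    ∃ M', Zbd c 0 ((19 / 20) ^ K * la) (mu + 2 * nu * ∑ k ∈ Finset.range K, sp c k) nu M' := by
  induction K with
  | zero => intro la mu M _ _ h; exact ⟨M, by simpa using h⟩
  | succ K ih =>
    intro la mu M hla hmu h
    obtain ⟨M', h'⟩ := ih (by positivity)
      (by have := sp_nonneg c K; positivity) (h.step c hla hmu)
    refine ⟨M', ?_⟩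
    convert h' using 1
    · ring
    · rw [Finset.sum_range_succ]; ring

lemma lists_sum {K : ℕ} {la mu nu : ℝ}
    (hb : ∀ Q : Finset (Syl C), (∀ s ∈ Q, Syl.valid c K s) →
      ∑ s ∈ Q, Real.exp (-Syl.cost K la mu nu s) ≤ 1 / 2) (n : ℕ) :
    ∀ Λ : Finset (List (Syl C)), (∀ l ∈ Λ, l.length ≤ n ∧ ∀ s ∈ l, Syl.valid c K s) →
      ∑ l ∈ Λ, Real.exp (-lcost K la mu nu l) ≤ 2 := by
  classical
  induction n with
  | zero =>
    intro Λ h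
    have hs : Λ ⊆ {[]} := by
      intro l hl
      have := (h l hl).1
      simpa using this
    calc ∑ l ∈ Λ, Real.exp (-lcost K la mu nu l) ≤
        ∑ l ∈ ({[]} : Finset (List (Syl C))), Real.exp (-lcost K la mu nu l) :=
          Finset.sum_le_sum_of_subset_of_nonneg hs fun _ _ _ => (Real.exp_pos _).le
      _ ≤ 2 := by simp [lcost]
  | succ n ih =>
    intro Λ h
    let Λ' : Finset (List (Syl C)) := (Λ.filter (· ≠ [])).image List.tail
    let Q : Finset (Syl C) := Λ.biUnion fun l => l.toFinset
    have hQ := hb Q (by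
      intro s hs
      obtain ⟨l, hl, hs⟩ := Finset.mem_biUnion.1 hs
      exact (h l hl).2 s (by simpa using hs))
    have hΛ' := ih Λ' (by
      intro l hl
      obtain ⟨l', hl', rfl⟩ := Finset.mem_image.1 hl
      have h1 := h l' (Finset.mem_filter.1 hl').1
      refine ⟨by simpa using h1.1, fun s hs => h1.2 s (List.mem_of_mem_tail hs)⟩)
    have hs : Λ ⊆ insert [] ((Q ×ˢ Λ').image fun p => p.1 :: p.2) := by
      intro l hl
      cases l with
      | nil => simp
      | cons a l =>
        refine Finset.mem_insert_of_mem (Finset.mem_image.2 ⟨(a, l), ?_, rfl⟩)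
        refine Finset.mem_product.2 ⟨?_, ?_⟩
        · exact Finset.mem_biUnion.2 ⟨_, hl, by simp⟩
        · exact Finset.mem_image.2 ⟨a :: l, by simp [hl], rfl⟩
    calc ∑ l ∈ Λ, Real.exp (-lcost K la mu nu l)
        ≤ ∑ l ∈ insert [] ((Q ×ˢ Λ').image fun p => p.1 :: p.2), Real.exp (-lcost K la mu nu l) :=
          Finset.sum_le_sum_of_subset_of_nonneg hs fun _ _ _ => (Real.exp_pos _).le
      _ = 1 + ∑ p ∈ Q ×ˢ Λ', Real.exp (-Syl.cost K la mu nu p.1) * Real.exp (-lcost K la mu nu p.2) := by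
          rw [Finset.sum_insert (by simp), Finset.sum_image]
          · simp only [lcost, List.map_nil, List.sum_nil, neg_zero, Real.exp_zero, List.map_cons,
              List.sum_cons, neg_add, Real.exp_add]
          · intro p _ p' _ he
            simp only [List.cons.injEq] at he
            exact Prod.ext he.1 he.2
      _ = 1 + (∑ s ∈ Q, Real.exp (-Syl.cost K la mu nu s)) *
            ∑ l ∈ Λ', Real.exp (-lcost K la mu nu l) := by
          rw [Finset.sum_mul_sum, Finset.sum_product]
      _ ≤ 2 := by
          have h0 : 0 ≤ ∑ s ∈ Q, Real.exp (-Syl.cost K la mu nu s) :=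
            Finset.sum_nonneg fun i _ => (Real.exp_pos _).le
          have h1 : 0 ≤ ∑ l ∈ Λ', Real.exp (-lcost K la mu nu l) :=
            Finset.sum_nonneg fun i _ => (Real.exp_pos _).le
          nlinarith

lemma Zbd.base {K : ℕ} {la mu nu : ℝ}
    (hb : ∀ Q : Finset (Syl C), (∀ s ∈ Q, Syl.valid c K s) →
      ∑ s ∈ Q, Real.exp (-Syl.cost K la mu nu s) ≤ 1 / 2) : Zbd c K la mu nu 2 := by
  classical
  intro F t hF
  have : ∀ g : PP C, ∃ l : List (Syl C), g ∈ F → ((∀ s ∈ l, Syl.valid c K s) ∧ evl c K l = g ∧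
      lcost K la mu nu l ≤ t g) := by
    intro g
    by_cases hg : g ∈ F
    · obtain ⟨l, h1, h2, h3, h4⟩ := hF g hg
      exact ⟨l, fun _ => ⟨h2, h3, h4⟩⟩
    · exact ⟨[], fun h => absurd h hg⟩
  choose L hL using this
  have hinj : Set.InjOn L (F : Set (PP C)) := by
    intro g hg g' hg' he
    rw [← (hL g hg).2.1, he, (hL g' hg').2.1]
  calc ∑ g ∈ F, Real.exp (-t g) ≤ ∑ g ∈ F, Real.exp (-lcost K la mu nu (L g)) :=
        Finset.sum_le_sum fun g hg => Real.exp_le_exp.2 (neg_le_neg (hL g hg).2.2)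
    _ = ∑ l ∈ F.image L, Real.exp (-lcost K la mu nu l) := by rw [Finset.sum_image hinj]
    _ ≤ 2 := by
      refine lists_sum c hb ((F.image L).sup List.length) _ ?_
      intro l hl
      refine ⟨Finset.le_sup (f := List.length) hl, ?_⟩
      obtain ⟨g, hg, rfl⟩ := Finset.mem_image.1 hl
      exact (hL g hg).1

lemma summable_exp_int {mu : ℝ} (hmu : 0 < mu) : Summable fun e : ℤ => Real.exp (-(mu * |(e : ℝ)|)) := by
  have h : Summable fun n : ℕ => Real.exp (-(mu * n)) := by
    have := Real.summable_exp_nat_mul_iff.2 (neg_lt_zero.2 hmu)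
    refine this.congr fun n => ?_
    congr 1; ring
  refine Summable.of_nat_of_neg ?_ ?_ <;> simpa using h

/-- uniform bound for syllables -/
lemma syl_sum {T : Set C} (hT : T.Finite) (hs : Sub T) {mu nu : ℝ} (hmu : 0 < mu) (hnu : 0 < nu) :
    ∃ Z : ℝ, 0 ≤ Z ∧ ∀ Q : Finset (Syl C), (∀ s ∈ Q, s.h ∈ gball T s.r) →
      ∑ s ∈ Q, Real.exp (-(mu * |(s.e : ℝ)| + nu * s.r)) ≤ Z := by
  classical
  obtain ⟨K, hK⟩ := hs (nu / 2) (by positivity)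
  have hK0 : 0 ≤ K := by
    have := hK 0
    have h2 : (0 : ℝ) ≤ ((gball T 0).ncard : ℝ) := by positivity
    simp at this
    linarith
  let f1 : ℤ × ℕ → ℝ := fun x => Real.exp (-(mu * |(x.1 : ℝ)|)) * (K * Real.exp (-(nu / 2 * x.2)))
  let f : (Let5 × VV) × (ℤ × ℕ) → ℝ := fun x => 1 * f1 x.2
  have h1 : Summable f1 := by
    refine Summable.mul_of_nonneg (summable_exp_int hmu) (g := fun n : ℕ => K * Real.exp (-(nu / 2 * n))) ?_ ?_ ?_
    · have := Real.summable_exp_nat_mul_iff.2 (by linarith : -(nu / 2) < 0)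
      refine (this.mul_left K).congr fun n => ?_
      congr 2; ring
    · intro e; positivity
    · intro n; positivity
  have hf10 : ∀ x, 0 ≤ f1 x := fun x => by positivity
  have h2 : Summable f := by
    refine Summable.mul_of_nonneg (f := fun _ : Let5 × VV => (1 : ℝ)) (Summable.of_finite) h1 ?_ ?_
    · intro _; norm_num
    · exact hf10
  have hf0 : ∀ x, 0 ≤ f x := fun x => by simpa [f] using hf10 x.2
  refine ⟨∑' x, f x, tsum_nonneg hf0, fun Q hQ => ?_⟩
  let π : Syl C → (Let5 × VV) × (ℤ × ℕ) := fun s => ((s.a, s.v), (s.e, s.r))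
  rw [← Finset.sum_fiberwise_of_maps_to (t := Q.image π) (g := π)
    (fun s hs => Finset.mem_image_of_mem _ hs)]
  refine le_trans (Finset.sum_le_sum fun x _ => ?_) (h2.sum_le_tsum (Q.image π) fun x _ => hf0 x)
  have hcard : (Q.filter (fun s => π s = x)).card ≤ (gball T x.2.2).ncard := by
    rw [← Set.ncard_coe_finset]
    refine Set.ncard_le_ncard_of_injOn (fun s => s.h) ?_ ?_ (gball_finite hT _)
    · intro s hs
      have hs := Finset.mem_filter.1 (Finset.mem_coe.1 hs)
      have : s.r = x.2.2 := by rw [← hs.2]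
      rw [← this]
      exact hQ s hs.1
    · intro s hs s' hs' he
      have hs := (Finset.mem_filter.1 (Finset.mem_coe.1 hs)).2
      have hs' := (Finset.mem_filter.1 (Finset.mem_coe.1 hs')).2
      rw [← hs'] at hs
      simp only [π, Prod.mk.injEq] at hs
      cases s; cases s'
      simp_all
  have hconst : ∀ s ∈ Q.filter (fun s => π s = x), Real.exp (-(mu * |(s.e : ℝ)| + nu * s.r)) =
      Real.exp (-(mu * |(x.2.1 : ℝ)| + nu * x.2.2)) := by
    intro s hs
    rw [← (Finset.mem_filter.1 hs).2]
  rw [Finset.sum_congr rfl hconst, Finset.sum_const, nsmul_eq_mul]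
  have h3 : ((Q.filter (fun s => π s = x)).card : ℝ) ≤ K * Real.exp (nu / 2 * x.2.2) :=
    le_trans (by exact_mod_cast hcard) (hK _)
  calc _ ≤ K * Real.exp (nu / 2 * x.2.2) * Real.exp (-(mu * |(x.2.1 : ℝ)| + nu * x.2.2)) :=
        mul_le_mul_of_nonneg_right h3 (Real.exp_pos _).le
    _ = f x := by
      simp only [f, f1, one_mul]
      rw [mul_assoc, ← Real.exp_add, mul_left_comm, ← Real.exp_add]
      congr 2; ring

/-- the finite generating set -/
def SW : Set (PP C) :=
  Set.range (rot (C := C)) ∪ Set.range (fun v : VV => dir c 0 v 0 1) ∪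
    {dir c 0 0 1 1, dir c 0 0 (-1) 1}

lemma SW_finite : (SW c).Finite := by
  unfold SW
  exact ((Set.finite_range _).union (Set.finite_range _)).union (by simp)

lemma SW_inv : (SW c)⁻¹ = SW c := by
  have h : ∀ g ∈ SW c, g⁻¹ ∈ SW c := by
    rintro g ((⟨a, rfl⟩ | ⟨v, rfl⟩) | (rfl | rfl))
    · left; left; exact ⟨-a, (rot_inv a).symm⟩
    · left; right; exact ⟨-v, by simp [dir_inv]⟩
    · right; right; simp [dir_inv]
    · right; left; simp [dir_inv]
  ext g
  constructor
  · intro hg; simpa using h _ hg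
  · intro hg; exact h g hg

lemma Rep_gball {la mu nu : ℝ} (hla : 0 ≤ la) (hmu : 0 ≤ mu) {n : ℕ} {g : PP C}
    (hg : g ∈ gball (SW c) n) : Rep c 0 la mu nu g (50 * la + n * (82 * la + mu)) := by
  obtain ⟨l, h1, h2, rfl⟩ := hg
  have h2' : (l.length : ℝ) ≤ n := by exact_mod_cast h2
  have key : Rep c 0 la mu nu l.prod (50 * la + l.length * (82 * la + mu)) := by
    clear h2 h2'
    induction l using List.reverseRecOn with
    | nil => simpa using Rep.one c
    | append_singleton l s ih =>
      have ih := ih fun x hx => h1 x (by simp [hx])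
      have hs := h1 s (by simp)
      rw [List.prod_append, List.prod_singleton]
      rcases hs with (⟨a, rfl⟩ | ⟨v, rfl⟩) | (rfl | rfl)
      · refine (ih.mul_rot c a).mono c ?_
        simp only [List.length_append, List.length_singleton]
        push_cast
        split_ifs <;> linarith
      · refine (ih.mul_dir c hla hmu v 0 1 0 (one_mem_gball _ _)).mono c ?_
        simp only [List.length_append, List.length_singleton]
        push_cast
        have : ((nrm 0 v : ℕ) : ℝ) ≤ 82 := by exact_mod_cast nrm_le 0 v
        have := mul_le_mul_of_nonneg_left this hla
        simp
        linarith
      · refine (ih.mul_dir c hla hmu 0 1 1 0 (one_mem_gball _ _)).mono c ?_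
        simp only [List.length_append, List.length_singleton]
        push_cast
        simp [nrm_zero]
        linarith
      · refine (ih.mul_dir c hla hmu 0 (-1) 1 0 (one_mem_gball _ _)).mono c ?_
        simp only [List.length_append, List.length_singleton]
        push_cast
        simp [nrm_zero]
        linarith
  refine key.mono c ?_
  have : 0 ≤ 82 * la + mu := by positivity
  have := mul_le_mul_of_nonneg_right h2' this
  linarith

lemma ball_bound {la mu nu M : ℝ} (hla : 0 ≤ la) (hmu : 0 ≤ mu) (hZ : Zbd c 0 la mu nu M) (n : ℕ) :
    ((gball (SW c) n).ncard : ℝ) ≤ M * Real.exp (50 * la) * Real.exp ((82 * la + mu) * n) := by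
  have hfin := gball_finite (SW_finite c) n
  have := hZ hfin.toFinset (fun _ => 50 * la + n * (82 * la + mu)) (by
    intro g hg
    exact Rep_gball c hla hmu (by simpa using hg))
  rw [Finset.sum_const, nsmul_eq_mul, ← Set.ncard_eq_toFinset_card _ hfin] at this
  rw [Real.exp_neg, ← div_eq_mul_inv, div_le_iff₀ (Real.exp_pos _), Real.exp_add] at this
  rw [mul_assoc]
  rwa [mul_comm (82 * la + mu) (n : ℝ)]

/-- criterion for subexponential growth of `SW` -/
lemma SW_sub (h : ∀ ε : ℝ, 0 < ε → ∃ (K : ℕ) (la mu nu : ℝ), 0 ≤ la ∧ 0 ≤ mu ∧ 0 ≤ nu ∧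
      82 * ((19 / 20) ^ K * la) + (mu + 2 * nu * ∑ k ∈ Finset.range K, sp c k) ≤ ε ∧
      ∀ Q : Finset (Syl C), (∀ s ∈ Q, Syl.valid c K s) →
      ∑ s ∈ Q, Real.exp (-Syl.cost K la mu nu s) ≤ 1 / 2) : Sub (SW c) := by
  intro ε hε
  obtain ⟨K, la, mu, nu, hla, hmu, hnu, hle, hb⟩ := h ε hε
  obtain ⟨M, hM⟩ := Zbd.iterate c hnu K hla hmu (Zbd.base c hb)
  have h0 : 0 ≤ (19 / 20 : ℝ) ^ K * la := by positivity
  have h1 : 0 ≤ mu + 2 * nu * ∑ k ∈ Finset.range K, sp c k := by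
    have := Finset.sum_nonneg (s := Finset.range K) fun k _ => sp_nonneg c k
    positivity
  refine ⟨M * Real.exp (50 * ((19 / 20) ^ K * la)), fun r => (ball_bound c h0 h1 hM r).trans ?_⟩
  refine mul_le_mul_of_nonneg_left (Real.exp_le_exp.2 ?_) ?_
  · exact mul_le_mul_of_nonneg_right hle (by positivity)
  · exact mul_nonneg (hM.nonneg c) (Real.exp_pos _).le

end counting
end SubexpEmb

namespace SubexpEmb
set_option linter.unusedSectionVars false

section schedule
variable {C : Type} [Group C]

lemma gens_finite (c : ℕ → C × C) (k : ℕ) : (gens c k).Finite := by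
  have : gens c k ⊆ ⋃ i ∈ Set.Iio k, ({(c i).1, (c i).1⁻¹, (c i).2, (c i).2⁻¹} : Set C) := by
    rintro x ⟨i, hi, hx⟩
    simp only [Set.mem_iUnion]
    exact ⟨i, hi, by simpa using hx⟩
  refine Set.Finite.subset (Set.Finite.biUnion (Set.finite_Iio k) fun i _ => ?_) this
  simp

lemma exists_schedule (hC : ∀ T : Set C, T.Finite → Sub T) (p : ℕ → C × C) :
    ∃ c : ℕ → C × C, Sub (SW c) ∧ ∀ j, ∃ k, c k = p j := by
  classical
  let T : ℕ → Set C := fun j => insert 1 (gens p j)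
  have hTf : ∀ j, (T j).Finite := fun j => (gens_finite p j).insert 1
  let d : ℕ → ℝ := fun j => 1 / ((j + 1) * (1 + 2 * j))
  have hd : ∀ j, 0 < d j := fun j => by positivity
  have hd' : ∀ j : ℕ, d j * (1 + 2 * j) = 1 / (j + 1) := fun j => by
    simp only [d]; field_simp
  have hZ := fun j => syl_sum (hTf j) (hC _ (hTf j)) (hd j) (hd j)
  choose Z hZ0 hZ using hZ
  let la : ℕ → ℝ := fun j => Real.log (2 * Z j + 1) / 50
  have hla0 : ∀ j, 0 ≤ la j := fun j => div_nonneg (Real.log_nonneg (by have := hZ0 j; linarith)) (by norm_num)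
  have hla : ∀ j, Real.exp (-(50 * la j)) * Z j ≤ 1 / 2 := fun j => by
    have := hZ0 j
    have e : 50 * la j = Real.log (2 * Z j + 1) := by simp only [la]; ring
    rw [e, Real.exp_neg, Real.exp_log (by linarith), inv_mul_le_iff₀ (by linarith)]
    linarith
  have hK : ∀ j : ℕ, ∃ N : ℕ, ∀ n ≥ N, (19 / 20 : ℝ) ^ n * la j ≤ 1 / (j + 1) := by
    intro j
    have h1 : Filter.Tendsto (fun n : ℕ => (19 / 20 : ℝ) ^ n * la j) Filter.atTop (nhds 0) := by
      have := (tendsto_pow_atTop_nhds_zero_of_lt_one (by norm_num : (0 : ℝ) ≤ 19 / 20)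
        (by norm_num)).mul_const (la j)
      simpa using this
    have h2 := h1.eventually (gt_mem_nhds (show (0 : ℝ) < 1 / (j + 1) by positivity))
    obtain ⟨N, hN⟩ := Filter.eventually_atTop.1 h2
    exact ⟨N, fun n hn => (hN n hn).le⟩
  choose N hN using hK
  let K : ℕ → ℕ := fun j => ∑ i ∈ Finset.range (j + 1), (N i + 1)
  have hKmono : StrictMono K := by
    apply strictMono_nat_of_lt_succ
    intro j
    simp only [K]
    rw [Finset.sum_range_succ _ (j + 1)]
    omega
  have hKN : ∀ j, N j ≤ K j := by
    intro j
    simp only [K]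
    rw [Finset.sum_range_succ]
    omega
  let c : ℕ → C × C := fun k => if h : ∃ j, K j = k then p h.choose else 1
  have hcK : ∀ j, c (K j) = p j := by
    intro j
    have h : ∃ j', K j' = K j := ⟨j, rfl⟩
    simp only [c]
    rw [dif_pos h]
    congr 1
    exact hKmono.injective h.choose_spec
  have hcn : ∀ k, (¬ ∃ j, K j = k) → c k = 1 := by
    intro k h
    simp only [c]
    rw [dif_neg h]
  refine ⟨c, ?_, fun j => ⟨K j, hcK j⟩⟩
  have hgens : ∀ j, gens c (K j) ⊆ T j := by
    rintro j x ⟨i, hi, hx⟩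
    by_cases h : ∃ j', K j' = i
    · obtain ⟨j', rfl⟩ := h
      rw [hcK] at hx
      right
      exact ⟨j', hKmono.lt_iff_lt.1 hi, hx⟩
    · rw [hcn i h] at hx
      left
      simpa using hx
  have hsp : ∀ j : ℕ, ∑ k ∈ Finset.range (K j), sp c k ≤ j := by
    intro j
    calc ∑ k ∈ Finset.range (K j), sp c k
        ≤ ∑ k ∈ Finset.range (K j), if k ∈ (Finset.range j).image K then (1 : ℝ) else 0 := by
          refine Finset.sum_le_sum fun k hk => ?_
          by_cases h : ∃ j', K j' = k
          · obtain ⟨j', rfl⟩ := h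
            have : j' < j := hKmono.lt_iff_lt.1 (Finset.mem_range.1 hk)
            rw [if_pos (Finset.mem_image_of_mem _ (Finset.mem_range.2 this))]
            unfold sp; split_ifs <;> norm_num
          · have : sp c k = 0 := by unfold sp; rw [if_pos (hcn k h)]
            rw [this]; split_ifs <;> norm_num
      _ = ((Finset.range (K j)).filter fun k => k ∈ (Finset.range j).image K).card := by
          rw [Finset.sum_boole]
      _ ≤ ((Finset.range j).image K).card := by
          have : (Finset.range (K j)).filter (fun k => k ∈ (Finset.range j).image K) ⊆
              (Finset.range j).image K := by
            intro k hk; exact (Finset.mem_filter.1 hk).2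
          exact_mod_cast Finset.card_le_card this
      _ ≤ j := by
          have := Finset.card_image_le (s := Finset.range j) (f := K)
          rw [Finset.card_range] at this
          exact_mod_cast this
  apply SW_sub
  intro ε hε
  obtain ⟨j, hj⟩ := exists_nat_gt (83 / ε)
  refine ⟨K j, la j, d j, d j, hla0 j, (hd j).le, (hd j).le, ?_, ?_⟩
  · have h1 := hN j (K j) (hKN j)
    have h2 : d j + 2 * d j * ∑ k ∈ Finset.range (K j), sp c k ≤ 1 / (j + 1) := by
      rw [← hd' j]
      have := mul_le_mul_of_nonneg_left (hsp j) (hd j).le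
      linarith
    have h3 : 83 * (1 / ((j : ℝ) + 1)) ≤ ε := by
      rw [div_lt_iff₀ hε] at hj
      rw [mul_one_div, div_le_iff₀ (by positivity)]
      nlinarith
    linarith
  · intro Q hQ
    have h1 := hZ j Q (fun s hs => gball_mono (hgens j) _ (hQ s hs))
    calc ∑ s ∈ Q, Real.exp (-Syl.cost (K j) (la j) (d j) (d j) s)
        ≤ ∑ s ∈ Q, Real.exp (-(50 * la j)) * Real.exp (-(d j * |(s.e : ℝ)| + d j * s.r)) := by
          refine Finset.sum_le_sum fun s _ => ?_
          rw [← Real.exp_add, Real.exp_le_exp]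
          simp only [Syl.cost]
          have : 0 ≤ la j * nrm (K j) s.v := mul_nonneg (hla0 j) (by positivity)
          linarith
      _ ≤ Real.exp (-(50 * la j)) * Z j := by
          rw [← Finset.mul_sum]
          exact mul_le_mul_of_nonneg_left h1 (Real.exp_pos _).le
      _ ≤ 1 / 2 := hla j

end schedule

section extraction
open scoped commutatorElement
variable {C : Type} [Group C] (c : ℕ → C × C)

lemma comm_pi {I G : Type} [Group G] (f g : I → G) (i : I) : ⁅f, g⁆ i = ⁅f i, g i⁆ := rfl

lemma perm_apply_inv {Y : Type} (g : Equiv.Perm Y) (y : Y) : g (g⁻¹ y) = y := g.apply_symm_apply y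

lemma perm_inv_apply {Y : Type} (g : Equiv.Perm Y) (y : Y) : g⁻¹ (g y) = y := g.symm_apply_apply y

def GG (k : ℕ) : Subgroup (PP C) :=
  Subgroup.closure (Set.range (rot (C := C)) ∪ Set.range (fun v : VV => dir c k v 0 1))

lemma rot_mem_GG (k : ℕ) (a : Let5) : rot a ∈ GG c k :=
  Subgroup.subset_closure (Or.inl ⟨a, rfl⟩)

lemma dir_mem_GG (k : ℕ) (v : VV) : dir c k v 0 1 ∈ GG c k :=
  Subgroup.subset_closure (Or.inr ⟨v, rfl⟩)

/-- permutations that do not touch the label -/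
def Pure : Subgroup (PP C) where
  carrier := {g | ∀ (y : YY C) (z : C), g (y.1, z) = ((g y).1, z)}
  one_mem' := fun _ _ => rfl
  mul_mem' := by
    intro f g hf hg y z
    simp only [Equiv.Perm.mul_apply]
    rw [hg y z, hf (g y) z]
  inv_mem' := by
    intro g hg y z
    rw [Equiv.Perm.inv_eq_iff_eq]
    rw [hg, perm_apply_inv]

lemma rot_pure (a : Let5) : rot a ∈ Pure (C := C) := by
  intro y z
  obtain ⟨b, y, rfl⟩ := exists_cons y
  have : ((cons b y).1, z) = cons b (y.1, z) := rfl
  rw [this, rot_cons, rot_cons]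
  rfl

lemma dir_pure (k : ℕ) (v : VV) : dir c k v 0 1 ∈ Pure (C := C) := by
  intro y z
  simp only [dir_apply, dirF]
  split_ifs <;> simp

lemma GG_pure (k : ℕ) : GG c k ≤ Pure (C := C) := by
  unfold GG
  rw [Subgroup.closure_le]
  rintro g (⟨a, rfl⟩ | ⟨v, rfl⟩)
  · exact rot_pure a
  · exact dir_pure c k v

lemma del_commute {g : PP C} (hg : g ∈ Pure (C := C)) (a : C) :
    ⁅del a, g * del a * g⁻¹⁆ = 1 := by
  rw [commutatorElement_eq_one_iff_mul_comm]
  have hg' : ∀ (y : YY C) (z : C), g (y.1, z) = ((g y).1, z) := hg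
  have key4 : ∀ w : YY C, all4 w → (g * del a * g⁻¹) (g w) = ((g w).1, a * (g w).2) := by
    intro w hw
    have e : (g w).2 = w.2 := by
      have := hg' w w.2
      rw [this]
    rw [Equiv.Perm.mul_apply, Equiv.Perm.mul_apply, perm_inv_apply, del_apply,
      delF_all4 _ _ hw, hg', e]
  have keyn : ∀ w : YY C, ¬ all4 w → (g * del a * g⁻¹) (g w) = g w := by
    intro w hw
    rw [Equiv.Perm.mul_apply, Equiv.Perm.mul_apply, perm_inv_apply, del_apply,
      delF_not _ _ hw]
  ext1 y
  obtain ⟨w, rfl⟩ := g.surjective y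
  rw [Equiv.Perm.mul_apply, Equiv.Perm.mul_apply (g * del a * g⁻¹), del_apply, del_apply]
  have hsame : ∀ (u : YY C) (z : C), all4 (u.1, z) ↔ all4 u := fun u z => Iff.rfl
  by_cases hw : all4 w
  · rw [key4 w hw]
    by_cases hy : all4 (g w)
    · rw [delF_all4 _ _ ((hsame _ _).2 hy), delF_all4 _ _ hy]
      have := hg' w (a * (g w).2)
      rw [← this, key4 _ ((hsame _ _).2 hw), this]
    · rw [delF_not _ _ (fun h => hy ((hsame _ _).1 h)), delF_not _ _ hy, key4 w hw]
  · rw [keyn w hw]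
    by_cases hy : all4 (g w)
    · rw [delF_all4 _ _ hy]
      have := hg' w (a * (g w).2)
      rw [← this, keyn _ (fun h => hw ((hsame _ _).1 h)), this]
    · rw [delF_not _ _ hy, keyn w hw]

lemma exists_om (k : ℕ) (a : Let5) : ∃ v, om k v = a := by
  by_cases h : k % 6 = 5
  · exact ⟨(0, a), by simp [om, h]⟩
  · exact ⟨(a, 0), by simp [om, h]⟩

lemma comp_mem (k : ℕ) (v : VV) (i : Let5) : comp c k v 0 1 i ∈ GG c (k + 1) := by
  rcases let5_cases i with rfl | rfl | rfl | rfl | rfl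
  · rw [comp0]; exact rot_mem_GG c _ _
  · rw [comp1]; simp
  · rw [comp2]; simp
  · rw [comp3]; simp
  · rw [comp4]; exact dir_mem_GG c _ _

lemma lift_GG (k : ℕ) {g : PP C} (hg : g ∈ GG c (k + 1)) :
    ∃ q : Let5 → PP C, Phi q ∈ GG c k ∧ q 4 = g ∧ ∀ i, q i ∈ GG c (k + 1) := by
  unfold GG at hg
  induction hg using Subgroup.closure_induction with
  | mem x hx =>
    rcases hx with ⟨a, rfl⟩ | ⟨v, rfl⟩
    · obtain ⟨v, rfl⟩ := exists_om k a
      refine ⟨fun i => comp c k v 0 1 (i - 4), ?_, ?_, ?_⟩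
      · have : Phi (fun i => comp c k v 0 1 (i - 4)) = rot 4 * dir c k v 0 1 * (rot 4)⁻¹ := by
          rw [eq_mul_inv_iff_mul_eq, dir_eq_Phi, rot_Phi]
        rw [this]
        exact mul_mem (mul_mem (rot_mem_GG c _ _) (dir_mem_GG c _ _)) (inv_mem (rot_mem_GG c _ _))
      · simp only [sub_self, comp0]
      · intro i; exact comp_mem c k v _
    · refine ⟨comp c k v 0 1, ?_, comp4 .., comp_mem c k v⟩
      rw [← dir_eq_Phi]; exact dir_mem_GG c _ _
  | one => exact ⟨1, by simp, rfl, fun i => one_mem _⟩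
  | mul x y _ _ ihx ihy =>
    obtain ⟨q, h1, h2, h3⟩ := ihx
    obtain ⟨q', h1', h2', h3'⟩ := ihy
    exact ⟨q * q', by rw [map_mul]; exact mul_mem h1 h1', by simp [h2, h2'],
      fun i => mul_mem (h3 i) (h3' i)⟩
  | inv x _ ih =>
    obtain ⟨q, h1, h2, h3⟩ := ih
    exact ⟨q⁻¹, by rw [map_inv]; exact inv_mem h1, by simp [h2], fun i => inv_mem (h3 i)⟩

lemma del_eq_Phi (c : ℕ → C × C) (z : C) : del z = Phi (fun i => if i = 4 then del z else 1) := by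
  have h0 : del z = Phi (comp c 0 0 0 z) := by rw [← dir_eq_Phi, dir_zero]
  refine h0.trans (congrArg Phi ?_)
  funext i
  rcases let5_cases i with rfl | rfl | rfl | rfl | rfl
  · rw [comp0, if_neg (by decide)]; simp [om_zero]
  · rw [comp1, if_neg (by decide)]; simp
  · rw [comp2, if_neg (by decide)]; simp
  · rw [comp3, if_neg (by decide)]
  · rw [comp4, if_pos rfl, dir_zero]

lemma extraction (n : ℕ) : ∀ k, ∃ g ∈ GG c k, ∃ h ∈ GG c k,
    h * ⁅dir c k 0 1 1, g * dir c k 0 1 1 * g⁻¹⁆ * h⁻¹ = del ⁅(c (k + n)).2, (c (k + n)).1⁆ := by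
  induction n with
  | zero =>
    intro k
    refine ⟨rot 1, rot_mem_GG c _ _, rot 2, rot_mem_GG c _ _, ?_⟩
    have e1 : rot 1 * dir c k 0 1 1 * (rot 1)⁻¹ = Phi (fun i => comp c k 0 1 1 (i - 1)) := by
      rw [mul_inv_eq_iff_eq_mul, dir_eq_Phi, rot_Phi]
    rw [mul_inv_eq_iff_eq_mul, e1, dir_eq_Phi, ← map_commutatorElement, rot_Phi, del_eq_Phi c]
    congr 2
    funext i
    simp only [comm_pi]
    rcases let5_cases i with rfl | rfl | rfl | rfl | rfl
    · rw [if_neg (by decide), show (0 - 2 : Let5) = 3 by decide, comp3, commutatorElement_one_left]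
    · rw [if_neg (by decide), show (1 - 2 : Let5) = 4 by decide, show (4 - 1 : Let5) = 3 by decide,
        comp3, commutatorElement_one_right]
    · rw [if_neg (by decide), show (2 - 2 : Let5) = 0 by decide, comp0, om_zero, rot_zero,
        commutatorElement_one_left]
    · rw [if_neg (by decide), show (3 - 2 : Let5) = 1 by decide, show (1 - 1 : Let5) = 0 by decide,
        comp0, om_zero, rot_zero, commutatorElement_one_right]
    · rw [if_pos rfl, show (4 - 2 : Let5) = 2 by decide, show (2 - 1 : Let5) = 1 by decide,
        comp1, comp2, zpow_one, zpow_one, map_commutatorElement, add_zero]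
  | succ n ih =>
    intro k
    obtain ⟨g, hg, h, hh, e⟩ := ih (k + 1)
    obtain ⟨q, hq1, hq2, hq3⟩ := lift_GG c k hg
    obtain ⟨r, hr1, hr2, hr3⟩ := lift_GG c k hh
    refine ⟨Phi q, hq1, Phi r, hr1, ?_⟩
    rw [dir_eq_Phi, ← map_inv, ← map_inv, ← map_mul, ← map_mul, ← map_commutatorElement, ← map_mul,
      ← map_mul, del_eq_Phi c]
    congr 1
    funext i
    simp only [Pi.mul_apply, Pi.inv_apply, comm_pi]
    rcases let5_cases i with rfl | rfl | rfl | rfl | rfl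
    · rw [if_neg (by decide), comp0, om_zero, rot_zero, commutatorElement_one_left]; simp
    · rw [if_neg (by decide), comp1, del_commute (GG_pure c _ (hq3 1))]; simp
    · rw [if_neg (by decide), comp2, del_commute (GG_pure c _ (hq3 2))]; simp
    · rw [if_neg (by decide), comp3, commutatorElement_one_left]; simp
    · rw [if_pos rfl, comp4, hq2, hr2, e, show k + 1 + n = k + (n + 1) by ring]

lemma GG_zero_le : GG c 0 ≤ Subgroup.closure (SW c) :=
  Subgroup.closure_mono Set.subset_union_left

lemma del_mem (k : ℕ) : del ⁅(c k).1, (c k).2⁆ ∈ Subgroup.closure (SW c) := by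
  obtain ⟨g, hg, h, hh, e⟩ := extraction c k 0
  rw [zero_add] at e
  rw [← commutatorElement_inv, map_inv, ← e]
  have hg := GG_zero_le c hg
  have hh := GG_zero_le c hh
  have hf : dir c 0 0 1 1 ∈ Subgroup.closure (SW c) := Subgroup.subset_closure (by simp [SW])
  refine inv_mem (mul_mem (mul_mem hh ?_) (inv_mem hh))
  have h2 := mul_mem (mul_mem hg hf) (inv_mem hg)
  rw [commutatorElement_def]
  exact mul_mem (mul_mem (mul_mem hf h2) (inv_mem hf)) (inv_mem h2)

/-- Part W: embedding the subgroup generated by countably many commutators. -/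
lemma partW (hC : ∀ T : Set C, T.Finite → Sub T) (p : ℕ → C × C) :
    ∃ (P : Type) (_ : Group P) (S : Set P) (φ : C →* P), S.Finite ∧ S⁻¹ = S ∧ Sub S ∧
      Function.Injective φ ∧ ∀ j, φ ⁅(p j).1, (p j).2⁆ ∈ Subgroup.closure S := by
  obtain ⟨c, hc, hp⟩ := exists_schedule hC p
  refine ⟨PP C, inferInstance, SW c, del, SW_finite c, SW_inv c, hc, del_inj, fun j => ?_⟩
  obtain ⟨k, hk⟩ := hp j
  rw [← hk]
  exact del_mem c k

end extraction
end SubexpEmb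

namespace SubexpEmb
set_option linter.unusedSectionVars false

section cellular
variable {B : Type} [Group B]

lemma floor_ediv (x : ℚ) (N : ℕ) (hN : 0 < N) : ⌊(N : ℚ) * x⌋ / (N : ℤ) = ⌊x⌋ := by
  have hN' : (0 : ℤ) < N := by exact_mod_cast hN
  have hNq : (0 : ℚ) < N := by exact_mod_cast hN
  symm
  rw [Int.floor_eq_iff]
  constructor
  · have h1 : ⌊(N : ℚ) * x⌋ / (N : ℤ) * N ≤ ⌊(N : ℚ) * x⌋ := Int.ediv_mul_le _ hN'.ne'
    have h2 : ((⌊(N : ℚ) * x⌋ : ℤ) : ℚ) ≤ N * x := Int.floor_le _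
    have h3 : (((⌊(N : ℚ) * x⌋ / (N : ℤ) : ℤ) : ℚ)) * N ≤ N * x :=
      le_trans (by exact_mod_cast h1) h2
    nlinarith
  · have h1 : ⌊(N : ℚ) * x⌋ + 1 ≤ (⌊(N : ℚ) * x⌋ / (N : ℤ) + 1) * N :=
      Int.lt_ediv_add_one_mul_self _ hN'
    have h2 : (N : ℚ) * x < ⌊(N : ℚ) * x⌋ + 1 := Int.lt_floor_add_one _
    have h3 : (N : ℚ) * x < (((⌊(N : ℚ) * x⌋ / (N : ℤ) : ℤ) : ℚ) + 1) * N :=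
      lt_of_lt_of_le h2 (by exact_mod_cast h1)
    nlinarith

/-- cellular maps of scale `N` -/
def HC (N : ℕ) (g : Equiv.Perm (ℚ × B)) : Prop :=
  (∃ (τ : ℤ → ℤ) (l : ℤ → B), ∀ x b, g (x, b) =
    (x + τ ⌊(N : ℚ) * x⌋ / N, l ⌊(N : ℚ) * x⌋ * b)) ∧ ∀ x b, (N : ℚ) ≤ |x| → g (x, b) = (x, b)

lemma HC.one (N : ℕ) : HC N (1 : Equiv.Perm (ℚ × B)) :=
  ⟨⟨fun _ => 0, fun _ => 1, by simp⟩, by simp⟩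

lemma HC.mul {N : ℕ} (hN : 0 < N) {g h : Equiv.Perm (ℚ × B)} (hg : HC N g) (hh : HC N h) :
    HC N (g * h) := by
  obtain ⟨⟨τ, l, h1⟩, h2⟩ := hg
  obtain ⟨⟨τ', l', h1'⟩, h2'⟩ := hh
  have hNq : (N : ℚ) ≠ 0 := by exact_mod_cast hN.ne'
  refine ⟨⟨fun i => τ' i + τ (i + τ' i), fun i => l (i + τ' i) * l' i, ?_⟩, ?_⟩
  · intro x b
    rw [Equiv.Perm.mul_apply, h1', h1]
    have e : ⌊(N : ℚ) * (x + τ' ⌊(N : ℚ) * x⌋ / N)⌋ = ⌊(N : ℚ) * x⌋ + τ' ⌊(N : ℚ) * x⌋ := by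
      rw [← Int.floor_add_intCast]
      congr 1
      field_simp
    rw [e]
    refine Prod.ext ?_ ?_
    · simp only; push_cast; ring
    · simp only [mul_assoc]
  · intro x b hx
    rw [Equiv.Perm.mul_apply, h2' x b hx, h2 x b hx]

lemma HC.refine {N : ℕ} (hN : 0 < N) {g : Equiv.Perm (ℚ × B)} (hg : HC N g) {M : ℕ} (hM : 0 < M) :
    HC (N * M) g := by
  obtain ⟨⟨τ, l, h1⟩, h2⟩ := hg
  have hNq : (N : ℚ) ≠ 0 := by exact_mod_cast hN.ne'
  have hMq : (M : ℚ) ≠ 0 := by exact_mod_cast hM.ne'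
  refine ⟨⟨fun i => M * τ (i / M), fun i => l (i / M), ?_⟩, ?_⟩
  · intro x b
    have e : ⌊((N * M : ℕ) : ℚ) * x⌋ / (M : ℤ) = ⌊(N : ℚ) * x⌋ := by
      have h := floor_ediv ((N : ℚ) * x) M hM
      rw [← h]
      have : ((N * M : ℕ) : ℚ) * x = (M : ℚ) * ((N : ℚ) * x) := by push_cast; ring
      rw [this]
    simp only [e, h1]
    refine Prod.ext ?_ rfl
    simp only; push_cast; field_simp
  · intro x b hx
    apply h2
    refine le_trans ?_ hx
    exact_mod_cast Nat.le_mul_of_pos_right N hM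

variable (B) in
/-- the group of cellular permutations -/
def LL : Subgroup (Equiv.Perm (ℚ × B)) where
  carrier := {g | ∃ N : ℕ, 0 < N ∧ HC N g ∧ HC N g⁻¹}
  one_mem' := ⟨1, one_pos, HC.one 1, by rw [inv_one]; exact HC.one 1⟩
  mul_mem' := by
    rintro g h ⟨N, hN, h1, h2⟩ ⟨M, hM, h3, h4⟩
    refine ⟨N * M, Nat.mul_pos hN hM, ?_, ?_⟩
    · refine HC.mul (Nat.mul_pos hN hM) (h1.refine hN hM) ?_
      rw [mul_comm]; exact h3.refine hM hN
    · rw [mul_inv_rev]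
      refine HC.mul (Nat.mul_pos hN hM) ?_ (h2.refine hN hM)
      rw [mul_comm]; exact h4.refine hM hN
  inv_mem' := by
    rintro g ⟨N, hN, h1, h2⟩
    exact ⟨N, hN, h2, by rwa [inv_inv]⟩

lemma common_scale {T : Set (Equiv.Perm (ℚ × B))} (hT : T.Finite) (hL : T ⊆ LL B) :
    ∃ N : ℕ, 0 < N ∧ ∀ g ∈ T, HC N g := by
  induction T, hT using Set.Finite.induction_on with
  | empty => exact ⟨1, one_pos, by simp⟩
  | @insert a T _ _ ih =>
    obtain ⟨N, hN, h⟩ := ih ((Set.subset_insert _ _).trans hL)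
    obtain ⟨M, hM, h1, _⟩ := hL (Set.mem_insert a T)
    refine ⟨N * M, Nat.mul_pos hN hM, ?_⟩
    rintro g (rfl | hg)
    · rw [mul_comm]; exact h1.refine hM hN
    · exact (h g hg).refine hN hM

lemma HC.bounded {N : ℕ} {g : Equiv.Perm (ℚ × B)} (hg : HC N g) (x : ℚ) (b : B)
    (hx : |x| ≤ N) : |(g (x, b)).1| ≤ N := by
  by_contra hlt
  push Not at hlt
  have h1 : g (g (x, b)) = g (x, b) := hg.2 _ _ hlt.le
  have h2 := g.injective h1
  rw [h2] at hlt
  exact absurd hx (not_le.2 hlt)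

lemma HC.ext {N : ℕ} (hN : 0 < N) {g h : Equiv.Perm (ℚ × B)} (hg : HC N g) (hh : HC N h)
    (hgh : ∀ i : ℤ, |i| ≤ (N : ℤ) ^ 2 → g ((i : ℚ) / N, 1) = h ((i : ℚ) / N, 1)) : g = h := by
  have hNq : (0 : ℚ) < N := by exact_mod_cast hN
  obtain ⟨⟨τ, l, h1⟩, h2⟩ := hg
  obtain ⟨⟨τ', l', h1'⟩, h2'⟩ := hh
  ext1 ⟨x, b⟩
  by_cases hx : (N : ℚ) ≤ |x|
  · rw [h2 _ _ hx, h2' _ _ hx]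
  · push Not at hx
    rw [abs_lt] at hx
    have hi : |⌊(N : ℚ) * x⌋| ≤ (N : ℤ) ^ 2 := by
      rw [abs_le]
      constructor
      · rw [Int.le_floor]; push_cast; nlinarith
      · rw [← Int.cast_le (R := ℚ)]
        refine (Int.floor_le _).trans ?_
        push_cast; nlinarith
    have := hgh _ hi
    have e : ⌊(N : ℚ) * ((⌊(N : ℚ) * x⌋ : ℚ) / N)⌋ = ⌊(N : ℚ) * x⌋ := by
      rw [mul_div_cancel₀ _ hNq.ne', Int.floor_intCast]
    rw [h1, h1', e, Prod.mk.injEq, mul_one, mul_one, add_right_inj] at this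
    rw [h1, h1', this.1, this.2]

lemma LL_sub (hB : ∀ T : Set B, T.Finite → Sub T) {T : Set (Equiv.Perm (ℚ × B))} (hT : T.Finite)
    (hL : T ⊆ LL B) : Sub T := by
  classical
  obtain ⟨N, hN, hHC⟩ := common_scale hT hL
  have hNq : (0 : ℚ) < N := by exact_mod_cast hN
  let J : Finset ℤ := Finset.Icc (-(N : ℤ) ^ 2) ((N : ℤ) ^ 2)
  have hJ : ∀ i, i ∈ J ↔ |i| ≤ (N : ℤ) ^ 2 := fun i => by
    rw [Finset.mem_Icc, abs_le]
  have hJ' : ∀ i : ℤ, i ∈ J ↔ |(i : ℚ) / N| ≤ N := fun i => by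
    rw [hJ, abs_div, abs_of_pos hNq, div_le_iff₀ hNq, ← sq, ← Int.cast_abs]
    exact_mod_cast Iff.rfl
  -- labels
  let TB : Set B := (fun p : Equiv.Perm (ℚ × B) × ℤ => (p.1 ((p.2 : ℚ) / N, 1)).2) '' (T ×ˢ (J : Set ℤ))
  have hTB : TB.Finite := (hT.prod J.finite_toSet).image _
  let X : Finset ℚ := J.image fun i : ℤ => (i : ℚ) / N
  have hstep : ∀ g ∈ T, ∀ i ∈ J, ∀ b, ∃ j ∈ J, ∃ w ∈ TB, g ((i : ℚ) / N, b) = ((j : ℚ) / N, w * b) := by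
    intro g hg i hi b
    have hgc := hHC g hg
    obtain ⟨⟨τ, l, h1⟩, h2⟩ := hHC g hg
    have e : ⌊(N : ℚ) * ((i : ℚ) / N)⌋ = i := by
      rw [mul_div_cancel₀ _ hNq.ne', Int.floor_intCast]
    have e1 : ∀ b, g ((i : ℚ) / N, b) = (((i + τ i : ℤ) : ℚ) / N, l i * b) := by
      intro b
      rw [h1, e]
      refine Prod.ext ?_ rfl
      push_cast; ring
    refine ⟨i + τ i, ?_, l i, ?_, e1 b⟩
    · rw [hJ']
      have := hgc.bounded _ b ((hJ' i).1 hi)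
      rwa [e1] at this
    · refine ⟨(g, i), ⟨hg, hi⟩, ?_⟩
      simp only [e1, mul_one]
  have hball : ∀ r, ∀ g ∈ gball T r, HC N g ∧ ∀ i ∈ J, ∀ b, ∃ j ∈ J, ∃ w ∈ gball TB r,
      g ((i : ℚ) / N, b) = ((j : ℚ) / N, w * b) := by
    rintro r g ⟨l, h1, h2, rfl⟩
    have : HC N l.prod ∧ ∀ i ∈ J, ∀ b, ∃ j ∈ J, ∃ w ∈ gball TB l.length,
      l.prod ((i : ℚ) / N, b) = ((j : ℚ) / N, w * b) := by
      clear h2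
      induction l with
      | nil =>
        refine ⟨by simpa using HC.one N, fun i hi b => ⟨i, hi, 1, one_mem_gball _ _, by simp⟩⟩
      | cons a l ih =>
        obtain ⟨ih1, ih2⟩ := ih fun s hs => h1 s (by simp [hs])
        have ha := h1 a (by simp)
        refine ⟨by rw [List.prod_cons]; exact HC.mul hN (hHC a ha) ih1, fun i hi b => ?_⟩
        obtain ⟨j, hj, w, hw, e⟩ := ih2 i hi b
        obtain ⟨j', hj', w', hw', e'⟩ := hstep a ha j hj (w * b)
        refine ⟨j', hj', w' * w, ?_, ?_⟩
        · rw [List.length_cons, add_comm]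
          exact mul_mem_gball (mem_gball_one hw') hw
        · rw [List.prod_cons, Equiv.Perm.mul_apply, e, e', mul_assoc]
    refine ⟨this.1, fun i hi b => ?_⟩
    obtain ⟨j, hj, w, hw, e⟩ := this.2 i hi b
    exact ⟨j, hj, w, gball_mono_r _ h2 hw, e⟩
  have hcount : ∀ r, (gball T r).ncard ≤ (X.card * (gball TB r).ncard) ^ J.card := by
    intro r
    have hfin := gball_finite hTB r
    let R : Finset ({i // i ∈ J} → ℚ × B) := Fintype.piFinset fun _ => X ×ˢ hfin.toFinset
    have hR : R.card = (X.card * (gball TB r).ncard) ^ J.card := by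
      simp only [R, Fintype.card_piFinset, Finset.card_product, Finset.prod_const, Finset.card_univ,
        Fintype.card_coe]
      rw [Set.ncard_eq_toFinset_card _ hfin]
    rw [← hR, ← Set.ncard_coe_finset]
    refine Set.ncard_le_ncard_of_injOn (fun g i => g ((i.1 : ℚ) / N, 1)) ?_ ?_ R.finite_toSet
    · intro g hg
      rw [Finset.mem_coe, Fintype.mem_piFinset]
      intro i
      obtain ⟨j, hj, w, hw, e⟩ := (hball r g hg).2 i.1 i.2 1
      simp only [e, mul_one]
      rw [Finset.mem_product]
      exact ⟨Finset.mem_image_of_mem (fun i : ℤ => (i : ℚ) / N) hj, by simpa using hw⟩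
    · intro g hg h hh he
      refine HC.ext hN (hball r g hg).1 (hball r h hh).1 fun i hi => ?_
      exact congrFun he ⟨i, (hJ i).2 hi⟩
  intro ε hε
  have hJ0 : 0 < J.card := Finset.card_pos.2 ⟨0, by rw [hJ]; simp⟩
  have hJ0' : (0 : ℝ) < J.card := by exact_mod_cast hJ0
  obtain ⟨K, hK⟩ := hB TB hTB (ε / J.card) (by positivity)
  refine ⟨(X.card * K) ^ J.card, fun r => ?_⟩
  calc ((gball T r).ncard : ℝ) ≤ (X.card * (gball TB r).ncard : ℝ) ^ J.card := by
        exact_mod_cast hcount r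
    _ ≤ (X.card * (K * Real.exp (ε / J.card * r))) ^ J.card := by
        refine pow_le_pow_left₀ (by positivity) ?_ _
        exact mul_le_mul_of_nonneg_left (hK r) (by positivity)
    _ = (X.card * K) ^ J.card * Real.exp (ε * r) := by
        rw [← mul_assoc, mul_pow, ← Real.exp_nat_mul]
        congr 2
        field_simp

lemma LL_locally (hB : ∀ T : Set B, T.Finite → Sub T) (T : Set ↥(LL B)) (hT : T.Finite) : Sub T := by
  rw [← sub_image_iff (LL B).subtype Subtype.val_injective]
  refine LL_sub hB (hT.image _) ?_
  rintro g ⟨x, _, rfl⟩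
  exact x.2

end cellular
end SubexpEmb

namespace SubexpEmb
set_option linter.unusedSectionVars false

section partC
variable {B : Type} [Group B]

/-- the twisted rotation map -/
def Mf (t : ℤ → B) (q : ℤ → ℚ) (p : ℚ × B) : ℚ × B :=
  (p.1 + q ⌊p.1⌋ - ⌊p.1 - ⌊p.1⌋ + q ⌊p.1⌋⌋, t ⌊p.1⌋ ^ ⌊p.1 - ⌊p.1⌋ + q ⌊p.1⌋⌋ * p.2)

lemma Mf_floor (t : ℤ → B) (q : ℤ → ℚ) (p : ℚ × B) : ⌊(Mf t q p).1⌋ = ⌊p.1⌋ := by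
  have : (Mf t q p).1 = Int.fract (p.1 - ⌊p.1⌋ + q ⌊p.1⌋) + (⌊p.1⌋ : ℤ) := by
    simp only [Mf, Int.fract]; ring
  rw [this, Int.floor_add_intCast, Int.floor_fract, zero_add]

lemma Mf_Mf (t : ℤ → B) (q q' : ℤ → ℚ) (p : ℚ × B) : Mf t q (Mf t q' p) = Mf t (q + q') p := by
  have h := Mf_floor t q' p
  have e : ⌊(Mf t q' p).1 - ⌊p.1⌋ + q ⌊p.1⌋⌋ =
      ⌊p.1 - ⌊p.1⌋ + (q + q') ⌊p.1⌋⌋ - ⌊p.1 - ⌊p.1⌋ + q' ⌊p.1⌋⌋ := by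
    rw [← Int.floor_sub_intCast]
    congr 1
    simp only [Mf, Pi.add_apply]; ring
  have e1 : Mf t q (Mf t q' p) = ((Mf t q' p).1 + q ⌊p.1⌋ - ⌊(Mf t q' p).1 - ⌊p.1⌋ + q ⌊p.1⌋⌋,
      t ⌊p.1⌋ ^ ⌊(Mf t q' p).1 - ⌊p.1⌋ + q ⌊p.1⌋⌋ * (Mf t q' p).2) := by
    rw [Mf, h]
  rw [e1, e]
  refine Prod.ext ?_ ?_
  · simp only [Mf, Pi.add_apply]; push_cast; ring
  · simp only [Mf]
    rw [← mul_assoc, ← zpow_add, sub_add_cancel]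

lemma Mf_of_zero (t : ℤ → B) (q : ℤ → ℚ) (p : ℚ × B) (h : q ⌊p.1⌋ = 0) : Mf t q p = p := by
  have e : ⌊p.1 - ⌊p.1⌋ + q ⌊p.1⌋⌋ = 0 := by
    rw [h, add_zero]; exact Int.floor_fract _
  rw [Mf, e, h]
  simp

/-- the twisted rotation as a permutation -/
def Mp (t : ℤ → B) (q : ℤ → ℚ) : Equiv.Perm (ℚ × B) where
  toFun := Mf t q
  invFun := Mf t (-q)
  left_inv p := by rw [Mf_Mf]; exact Mf_of_zero _ _ _ (by simp)
  right_inv p := by rw [Mf_Mf]; exact Mf_of_zero _ _ _ (by simp)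

lemma Mp_apply (t : ℤ → B) (q : ℤ → ℚ) (p : ℚ × B) : Mp t q p = Mf t q p := rfl

lemma Mp_inv (t : ℤ → B) (q : ℤ → ℚ) : (Mp t q)⁻¹ = Mp t (-q) := by
  rw [inv_eq_iff_mul_eq_one]
  ext1 p
  rw [Equiv.Perm.mul_apply, Mp_apply, Mp_apply, Mf_Mf]; exact Mf_of_zero _ _ _ (by simp)

lemma Mp_HC (t : ℤ → B) (q : ℤ → ℚ) (N : ℕ) (hN : 0 < N) (r : ℤ → ℤ) (hr : ∀ m, (N : ℚ) * q m = r m)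
    (hq : ∀ m, q m ≠ 0 → |m| < N) : HC N (Mp t q) := by
  have hNq : (0 : ℚ) < N := by exact_mod_cast hN
  refine ⟨⟨fun i => r (i / N) - N * ((i - N * (i / N) + r (i / N)) / N),
    fun i => t (i / N) ^ ((i - N * (i / N) + r (i / N)) / N), ?_⟩, ?_⟩
  · intro x b
    rw [Mp_apply]
    have e := floor_ediv x N hN
    have e2 : ⌊(N : ℚ) * x⌋ - N * ⌊x⌋ + r ⌊x⌋ = ⌊(N : ℚ) * (x - ⌊x⌋ + q ⌊x⌋)⌋ := by
      have : (N : ℚ) * (x - ⌊x⌋ + q ⌊x⌋) = N * x + ((r ⌊x⌋ - N * ⌊x⌋ : ℤ) : ℚ) := by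
        push_cast; rw [← hr]; ring
      rw [this, Int.floor_add_intCast]; ring
    simp only [e, e2, floor_ediv _ N hN, Mf]
    refine Prod.ext ?_ rfl
    simp only
    push_cast
    rw [← hr]
    field_simp
    ring
  · intro x b hx
    refine Mf_of_zero _ _ _ ?_
    by_contra h0
    have h1 := abs_lt.1 (hq _ h0)
    simp only at h1
    rcases le_abs'.1 hx with h | h
    · have h2 : ⌊x⌋ ≤ -(N : ℤ) := by
        rw [← Int.cast_le (R := ℚ)]; push_cast; exact (Int.floor_le x).trans h
      omega
    · have : (N : ℤ) ≤ ⌊x⌋ := Int.le_floor.2 (by exact_mod_cast h)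
      omega

lemma exists_scale (q : ℤ →₀ ℚ) : ∃ N : ℕ, 0 < N ∧ (∃ r : ℤ → ℤ, ∀ m, (N : ℚ) * q m = r m) ∧
    ∀ m, q m ≠ 0 → |m| < N := by
  let D : ℕ := ∏ m ∈ q.support, (q m).den
  have hD : 0 < D := Finset.prod_pos fun m _ => (q m).pos
  let E : ℕ := ∑ m ∈ q.support, m.natAbs + 1
  refine ⟨D * E, by positivity, ?_, ?_⟩
  · suffices h : ∀ m, ∃ r : ℤ, ((D * E : ℕ) : ℚ) * q m = r by
      choose r hr using h; exact ⟨r, hr⟩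
    intro m
    by_cases hm : m ∈ q.support
    · obtain ⟨c, hc⟩ := Finset.dvd_prod_of_mem (fun m => (q m).den) hm
      refine ⟨c * E * (q m).num, ?_⟩
      have h1 : ((q m).den : ℚ) * q m = (q m).num := Rat.den_mul_eq_num _
      have h2 : (D : ℚ) = (q m).den * c := by exact_mod_cast hc
      push_cast [h2]
      rw [← h1]; ring
    · exact ⟨0, by rw [Finsupp.notMem_support_iff.1 hm]; simp⟩
  · intro m hm
    have h1 : m.natAbs ≤ ∑ m ∈ q.support, m.natAbs :=
      Finset.single_le_sum (f := fun m : ℤ => m.natAbs) (fun _ _ => Nat.zero_le _)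
        (Finsupp.mem_support_iff.2 hm)
    have h2 : E ≤ D * E := Nat.le_mul_of_pos_left _ hD
    have h3 : m.natAbs < E := Nat.lt_succ_of_le h1
    rw [Int.abs_eq_natAbs]
    exact_mod_cast h3.trans_le h2

lemma Mp_mem (t : ℤ → B) (q : ℤ →₀ ℚ) : Mp t q ∈ LL B := by
  obtain ⟨N, hN, ⟨r, hr⟩, hq⟩ := exists_scale q
  refine ⟨N, hN, Mp_HC t q N hN r hr hq, ?_⟩
  rw [Mp_inv]
  exact Mp_HC t _ N hN (-r) (fun m => by simp [hr]) (fun m hm => hq m (by simpa using hm))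

/-- twisted rotations as a homomorphism -/
noncomputable def ML (t : ℤ → B) : Multiplicative (ℤ →₀ ℚ) →* ↥(LL B) where
  toFun q := ⟨Mp t q.toAdd, Mp_mem t q.toAdd⟩
  map_one' := by
    ext1; ext1 p
    exact Mf_of_zero _ _ _ (by simp)
  map_mul' q q' := by
    ext1; ext1 p
    simp only [toAdd_mul, Subgroup.coe_mul, Equiv.Perm.mul_apply, Mp_apply, Mf_Mf, Finsupp.coe_add]

lemma ML_apply (t : ℤ → B) (q : ℤ →₀ ℚ) (p : ℚ × B) :
    (ML t (Multiplicative.ofAdd q) : Equiv.Perm (ℚ × B)) p = Mf t q p := rfl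

lemma ML_congr (t t' : ℤ → B) (q : ℤ →₀ ℚ) (h : ∀ m, q m ≠ 0 → t m = t' m) :
    ML t (Multiplicative.ofAdd q) = ML t' (Multiplicative.ofAdd q) := by
  ext1; ext1 p
  rw [ML_apply, ML_apply]
  by_cases h0 : q ⌊p.1⌋ = 0
  · rw [Mf_of_zero _ _ _ h0, Mf_of_zero _ _ _ h0]
  · rw [Mf, Mf, h _ h0]

/-- interval permutations -/
def PiP (σ : Equiv.Perm ℤ) : Equiv.Perm (ℚ × B) where
  toFun p := (p.1 + ((σ ⌊p.1⌋ - ⌊p.1⌋ : ℤ) : ℚ), p.2)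
  invFun p := (p.1 + ((σ⁻¹ ⌊p.1⌋ - ⌊p.1⌋ : ℤ) : ℚ), p.2)
  left_inv p := by
    refine Prod.ext ?_ rfl
    simp only [Int.floor_add_intCast]
    rw [add_sub_cancel, perm_inv_apply]; push_cast; ring
  right_inv p := by
    refine Prod.ext ?_ rfl
    simp only [Int.floor_add_intCast]
    rw [add_sub_cancel, perm_apply_inv]; push_cast; ring

lemma PiP_HC (σ : Equiv.Perm ℤ) (N : ℕ) (hN : 0 < N) (hσ : ∀ m, σ m ≠ m → |m| < N) :
    HC N (PiP σ : Equiv.Perm (ℚ × B)) := by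
  have hNq : (0 : ℚ) < N := by exact_mod_cast hN
  refine ⟨⟨fun i => N * (σ (i / N) - i / N), fun _ => 1, ?_⟩, ?_⟩
  · intro x b
    simp only [floor_ediv x N hN, PiP, Equiv.coe_fn_mk, one_mul]
    refine Prod.ext ?_ rfl
    simp only; push_cast; field_simp
  · intro x b hx
    simp only [PiP, Equiv.coe_fn_mk]
    have : σ ⌊x⌋ = ⌊x⌋ := by
      by_contra h0
      have h1 := abs_lt.1 (hσ _ h0)
      rcases le_abs'.1 hx with h | h
      · have h2 : ⌊x⌋ ≤ -(N : ℤ) := by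
          rw [← Int.cast_le (R := ℚ)]; push_cast; exact (Int.floor_le x).trans h
        omega
      · have : (N : ℤ) ≤ ⌊x⌋ := Int.le_floor.2 (by exact_mod_cast h)
        omega
    rw [this]; simp

lemma PiP_swap_mem (a b : ℤ) : (PiP (Equiv.swap a b) : Equiv.Perm (ℚ × B)) ∈ LL B := by
  have h : ∀ m, Equiv.swap a b m ≠ m → |m| < (a.natAbs + b.natAbs + 1 : ℕ) := by
    intro m hm
    have : m = a ∨ m = b := by
      by_contra h
      push Not at h
      exact hm (Equiv.swap_apply_of_ne_of_ne h.1 h.2)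
    rw [Int.abs_eq_natAbs]
    rcases this with rfl | rfl <;> omega
  refine ⟨a.natAbs + b.natAbs + 1, Nat.succ_pos _, PiP_HC _ _ (Nat.succ_pos _) h, ?_⟩
  have e : (PiP (Equiv.swap a b) : Equiv.Perm (ℚ × B))⁻¹ = PiP (Equiv.swap a b)⁻¹ := by
    ext1 p; rfl
  rw [e, Equiv.swap_inv]
  exact PiP_HC _ _ (Nat.succ_pos _) h

/-- `S m t q` -/
noncomputable def SS (m : ℤ) (t : B) (q : ℚ) : ↥(LL B) :=
  ML (fun _ => t) (Multiplicative.ofAdd (Finsupp.single m q))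

lemma SS_add (m : ℤ) (t : B) (q q' : ℚ) : SS m t (q + q') = SS m t q * SS m t q' := by
  rw [SS, Finsupp.single_add, ofAdd_add, map_mul]; rfl

lemma SS_apply (m : ℤ) (t : B) (q : ℚ) (p : ℚ × B) :
    (SS m t q : Equiv.Perm (ℚ × B)) p = Mf (fun _ => t) (Finsupp.single m q) p := rfl

lemma SS_conj (a b : ℤ) (t : B) (q : ℚ) :
    (⟨PiP (Equiv.swap a b), PiP_swap_mem a b⟩ : ↥(LL B)) * SS a t q =
      SS b t q * ⟨PiP (Equiv.swap a b), PiP_swap_mem a b⟩ := by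
  ext1; ext1 p
  simp only [Subgroup.coe_mul, Equiv.Perm.mul_apply, SS_apply]
  have h1 : ∀ p : ℚ × B, (PiP (Equiv.swap a b) : Equiv.Perm (ℚ × B)) p =
    (p.1 + ((Equiv.swap a b ⌊p.1⌋ - ⌊p.1⌋ : ℤ) : ℚ), p.2) := fun _ => rfl
  rw [h1, Mf_floor, h1]
  simp only [Mf, Int.floor_add_intCast, add_sub_cancel]
  have e : (Finsupp.single b q) (Equiv.swap a b ⌊p.1⌋) = (Finsupp.single a q) ⌊p.1⌋ := by
    rw [Finsupp.single_apply, Finsupp.single_apply]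
    congr 1
    rw [eq_iff_iff, eq_comm, Equiv.swap_apply_eq_iff, Equiv.swap_apply_right, eq_comm]
  rw [e]
  have e2 : p.1 + ((Equiv.swap a b ⌊p.1⌋ - ⌊p.1⌋ : ℤ) : ℚ) - (Equiv.swap a b ⌊p.1⌋ : ℤ) =
    p.1 - ⌊p.1⌋ := by push_cast; ring
  rw [e2]
  refine Prod.ext ?_ rfl
  simp only; ring

/-- the basic multiplicativity -/
lemma SS_mul (m : ℤ) (t t' : B) (q : ℚ) (h0 : 0 ≤ q) (h1 : q ≤ 1) :
    SS m t q * SS m 1 (-q) * SS m t' q = SS m (t * t') q := by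
  ext1; ext1 p
  simp only [Subgroup.coe_mul, Equiv.Perm.mul_apply, SS_apply]
  by_cases hm : ⌊p.1⌋ = m
  · have f1 : ∀ (t : B) (q : ℚ) (p : ℚ × B), ⌊p.1⌋ = m → Mf (fun _ => t) (Finsupp.single m q) p =
      (p.1 + q - ⌊p.1 - m + q⌋, t ^ ⌊p.1 - m + q⌋ * p.2) := by
      intro t q p hp
      simp [Mf, hp]
    have f2 : ∀ (t : B) (q : ℚ) (p : ℚ × B), ⌊p.1⌋ = m →
      ⌊(Mf (fun _ => t) (Finsupp.single m q) p).1⌋ = m := fun t q p hp => by rw [Mf_floor, hp]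
    have g1 := f2 t' q p hm
    have g2 := f2 1 (-q) _ g1
    rw [f1 t q _ g2, f1 1 (-q) _ g1, f1 t' q _ hm, f1 _ _ _ hm]
    have hk0 : ⌊p.1 - m⌋ = 0 := by rw [Int.floor_sub_intCast, hm, sub_self]
    simp only
    have e1 : p.1 + q - ⌊p.1 - m + q⌋ - m + -q = p.1 - m - (⌊p.1 - m + q⌋ : ℤ) := by ring
    rw [e1, Int.floor_sub_intCast, hk0]
    have e2 : p.1 + q - ⌊p.1 - m + q⌋ + -q - ((0 - ⌊p.1 - m + q⌋ : ℤ) : ℚ) = p.1 := by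
      push_cast; ring
    rw [e2, one_zpow, one_mul, ← mul_assoc]
    have hk : ⌊p.1 - m + q⌋ = 0 ∨ ⌊p.1 - m + q⌋ = 1 := by
      obtain ⟨a1, a2⟩ := Int.floor_eq_iff.1 hk0
      push_cast at a1 a2
      have b1 : 0 ≤ ⌊p.1 - m + q⌋ := Int.floor_nonneg.2 (by linarith)
      have b2 : ⌊p.1 - m + q⌋ < 2 := Int.floor_lt.2 (by push_cast; linarith)
      omega
    rcases hk with h | h <;> rw [h] <;> simp
  · have f : ∀ (t : B) (q : ℚ), Mf (fun _ => t) (Finsupp.single m q) p = p := by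
      intro t q
      exact Mf_of_zero _ _ _ (Finsupp.single_eq_of_ne hm)
    rw [f, f, f, f]

lemma SS_one_apply (b : B) (p : ℚ × B) : (SS 0 b 1 : Equiv.Perm (ℚ × B)) p =
    if ⌊p.1⌋ = 0 then (p.1, b * p.2) else p := by
  rw [SS_apply]
  split_ifs with h
  · simp [Mf, h]
  · exact Mf_of_zero _ _ _ (Finsupp.single_eq_of_ne h)

end partC
end SubexpEmb

namespace SubexpEmb
set_option linter.unusedSectionVars false
open scoped TensorProduct

section abel
variable {B : Type} [Group B]

/-- abelianized invariant -/
noncomputable def cc (t : B) (q : ℚ) : Additive (Abelianization ↥(LL B)) :=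
  Additive.ofMul (Abelianization.of (SS 0 t q))

lemma cc_eq (m : ℤ) (t : B) (q : ℚ) :
    Additive.ofMul (Abelianization.of (SS m t q)) = cc t q := by
  rw [cc]
  congr 1
  have := congrArg Abelianization.of (SS_conj m 0 t q)
  rw [map_mul, map_mul, mul_comm] at this
  exact mul_right_cancel this

lemma cc_add (t : B) (q q' : ℚ) : cc t (q + q') = cc t q + cc t q' := by
  rw [cc, SS_add, map_mul]; rfl

lemma cc_one_one : cc (1 : B) 1 = 0 := by
  have : SS 0 (1 : B) 1 = 1 := by
    ext1; ext1 p
    rw [SS_one_apply]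
    simp
  rw [cc, this, map_one]; rfl

/-- additive version -/
noncomputable def ccH (t : B) : ℚ →+ Additive (Abelianization ↥(LL B)) :=
  AddMonoidHom.mk' (cc t) (cc_add t)

lemma ccH_apply (t : B) (q : ℚ) : ccH t q = cc t q := rfl

lemma ccH_mul_small (t t' : B) (q : ℚ) (h0 : 0 ≤ q) (h1 : q ≤ 1) :
    ccH t q - ccH 1 q + ccH t' q = ccH (t * t') q := by
  have := congrArg (fun x => Additive.ofMul (Abelianization.of x)) (SS_mul 0 t t' q h0 h1)
  simp only [map_mul, ofMul_mul] at this
  rw [sub_eq_add_neg, ← map_neg]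
  exact this

lemma ccH_mul (t t' : B) : ccH t - ccH 1 + ccH t' = ccH (t * t') := by
  ext1 q
  have h : q = q.num • ((1 : ℚ) / q.den) := by
    rw [zsmul_eq_mul, mul_one_div, Rat.num_div_den]
  have hd : (1 : ℚ) ≤ q.den := by exact_mod_cast q.pos
  have := ccH_mul_small t t' ((1 : ℚ) / q.den) (by positivity) (by
    rw [div_le_one (by positivity)]; exact hd)
  rw [h]
  simp only [AddMonoidHom.add_apply, AddMonoidHom.sub_apply, map_zsmul]
  rw [← this, smul_add, smul_sub]

/-- the homomorphism `θ` -/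
noncomputable def thB : B →* Multiplicative (ℚ →+ Additive (Abelianization ↥(LL B))) where
  toFun b := Multiplicative.ofAdd (ccH b - ccH 1)
  map_one' := by simp
  map_mul' b b' := by
    rw [← ofAdd_add, ← ccH_mul]
    congr 1

noncomputable def thA : Additive (Abelianization B) →+ (ℚ →+ Additive (Abelianization ↥(LL B))) :=
  MonoidHom.toAdditiveLeft (Abelianization.lift thB)

lemma thA_apply (b : B) (q : ℚ) :
    thA (Additive.ofMul (Abelianization.of b)) q = cc b q - cc 1 q := by
  have : thA (Additive.ofMul (Abelianization.of b)) = ccH b - ccH 1 := by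
    simp only [thA]
    change (Abelianization.lift thB (Abelianization.of b)).toAdd = _
    rw [Abelianization.lift_apply_of]; rfl
  rw [this]; rfl

/-- the bilinear extension -/
noncomputable def thT : ℚ ⊗[ℤ] Additive (Abelianization B) →+ Additive (Abelianization ↥(LL B)) :=
  TensorProduct.liftAddHom thA.flip (by
    intro r q a
    simp only [AddMonoidHom.flip_apply, map_zsmul, AddMonoidHom.smul_apply])

lemma thT_tmul (b : B) (q : ℚ) :
    thT (q ⊗ₜ Additive.ofMul (Abelianization.of b)) = cc b q - cc 1 q := by
  rw [thT, TensorProduct.liftAddHom_tmul, AddMonoidHom.flip_apply, thA_apply]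

lemma linalg (B : Type) [Group B] [Countable B] : ∃ (t : ℕ → B) (ψ : B →* Multiplicative (ℕ →₀ ℚ)), ∀ b : B,
    (1 : ℚ) ⊗ₜ[ℤ] Additive.ofMul (Abelianization.of b) =
      (ψ b).toAdd.sum fun i q => q ⊗ₜ[ℤ] Additive.ofMul (Abelianization.of (t i)) := by
  classical
  let A := Additive (Abelianization B)
  let ι : B → ℚ ⊗[ℤ] A := fun b => (1 : ℚ) ⊗ₜ[ℤ] Additive.ofMul (Abelianization.of b)
  have hι : ∀ b b', ι (b * b') = ι b + ι b' := fun b b' => by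
    simp only [ι, map_mul, ofMul_mul, TensorProduct.tmul_add]
  have hs : ⊤ ≤ Submodule.span ℚ (Set.range ι) := by
    rintro x -
    induction x using TensorProduct.induction_on with
    | zero => exact Submodule.zero_mem _
    | add x y hx hy => exact Submodule.add_mem _ hx hy
    | tmul q a =>
      obtain ⟨b, hb⟩ := (QuotientGroup.mk_surjective : Function.Surjective (Abelianization.of (G := B))) a.toMul
      have : q ⊗ₜ[ℤ] a = q • ι b := by
        have hb2 : Abelianization.of b = a.toMul := hb
        simp only [ι, hb2, ofMul_toMul, TensorProduct.smul_tmul', smul_eq_mul, mul_one]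
      rw [this]
      exact Submodule.smul_mem _ _ (Submodule.subset_span ⟨b, rfl⟩)
  let bas := Module.Basis.ofSpan hs
  have hsub := Module.Basis.ofSpan_subset hs
  have hch : ∀ i, ∃ b, ι b = bas i := fun i => hsub ⟨i, rfl⟩
  choose s hsι using hch
  have hinj : Function.Injective s := fun i j hij => by
    apply bas.injective
    rw [← hsι, ← hsι, hij]
  obtain ⟨e, he⟩ := exists_injective_nat B
  let f := fun i => e (s i)
  have hf : Function.Injective f := he.comp hinj
  refine ⟨Function.extend f s 1, 
    { toFun := fun b => Multiplicative.ofAdd (Finsupp.mapDomain f (bas.repr (ι b)))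
      map_one' := ?_
      map_mul' := ?_ }, ?_⟩
  · have : ι 1 = 0 := by simpa using hι 1 1
    rw [this]; simp
  · intro b b'
    rw [hι, map_add, Finsupp.mapDomain_add]; rfl
  · intro b
    change ι b = (Finsupp.mapDomain f (bas.repr (ι b))).sum _
    rw [Finsupp.sum_mapDomain_index (by simp) (by intros; rw [TensorProduct.add_tmul])]
    conv_lhs => rw [← bas.linearCombination_repr (ι b), Finsupp.linearCombination_apply]
    refine Finsupp.sum_congr fun i _ => ?_
    rw [hf.extend_apply, ← hsι]
    simp only [ι, TensorProduct.smul_tmul', smul_eq_mul, mul_one]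

/-- the composite of `ML` with abelianization -/
noncomputable def chiM (t : ℤ → B) : (ℤ →₀ ℚ) →+ Additive (Abelianization ↥(LL B)) :=
  AddMonoidHom.mk' (fun q => Additive.ofMul (Abelianization.of (ML t (Multiplicative.ofAdd q)))) (by
    intro a b; rw [ofAdd_add, map_mul, map_mul]; rfl)

lemma chiM_single (t : ℤ → B) (m : ℤ) (q : ℚ) : chiM t (Finsupp.single m q) = cc (t m) q := by
  rw [← cc_eq m]
  change Additive.ofMul (Abelianization.of _) = _
  rw [SS, ML_congr t (fun _ => t m)]
  intro k hk
  by_contra h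
  exact hk (Finsupp.single_eq_of_ne (by rintro rfl; exact h rfl))

/-- the two index embeddings -/
noncomputable def qh : (ℕ →₀ ℚ) →+ (ℤ →₀ ℚ) :=
  Finsupp.mapDomain.addMonoidHom (fun i : ℕ => (2 * i + 2 : ℤ)) -
    Finsupp.mapDomain.addMonoidHom (fun i : ℕ => (2 * i + 1 : ℤ))

/-- labels -/
def th (t : ℕ → B) (m : ℤ) : B := if m % 2 = 1 then t (m / 2).toNat else 1

lemma th_odd (t : ℕ → B) (i : ℕ) : th t (2 * i + 1) = t i := by
  rw [th, if_pos (by omega)]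
  congr 1; omega

lemma th_even (t : ℕ → B) (i : ℕ) : th t (2 * i + 2) = 1 := by
  rw [th, if_neg (by omega)]

lemma qh_zero (v : ℕ →₀ ℚ) : qh v 0 = 0 := by
  simp only [qh, AddMonoidHom.sub_apply, Finsupp.sub_apply, Finsupp.mapDomain.addMonoidHom_apply]
  rw [Finsupp.mapDomain_of_notMem_range, Finsupp.mapDomain_of_notMem_range, sub_zero]
  · rintro ⟨i, hi⟩; simp only at hi; omega
  · rintro ⟨i, hi⟩; simp only at hi; omega

lemma chiM_qh (t : ℕ → B) (v : ℕ →₀ ℚ) : chiM (th t) (qh v) =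
    -thT (v.sum fun i q => q ⊗ₜ[ℤ] Additive.ofMul (Abelianization.of (t i))) := by
  induction v using Finsupp.induction_linear with
  | zero => simp
  | add f g hf hg =>
    rw [map_add, map_add, hf, hg, Finsupp.sum_add_index' (by simp)
      (by intros; rw [TensorProduct.add_tmul]), map_add, neg_add]
  | single i q =>
    rw [Finsupp.sum_single_index (by simp), thT_tmul]
    simp only [qh, AddMonoidHom.sub_apply, Finsupp.mapDomain.addMonoidHom_apply,
      Finsupp.mapDomain_single, map_sub, chiM_single]
    rw [th_odd, th_even]; abel

/-- the embedding -/
noncomputable def bet (t : ℕ → B) (ψ : B →* Multiplicative (ℕ →₀ ℚ)) : B →* ↥(LL B) where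
  toFun b := SS 0 b 1 * ML (th t) (Multiplicative.ofAdd (qh (ψ b).toAdd))
  map_one' := by
    ext1; ext1 p
    simp only [Subgroup.coe_mul, Equiv.Perm.mul_apply, map_one, toAdd_one, map_zero, ofAdd_zero,
      SS_one_apply]
    simp
  map_mul' b b' := by
    rw [map_mul, toAdd_mul, map_add, ofAdd_add, map_mul]
    have h1 : SS 0 (b * b') 1 = SS 0 b 1 * SS 0 b' 1 := by
      ext1; ext1 p
      simp only [Subgroup.coe_mul, Equiv.Perm.mul_apply, SS_one_apply]
      split_ifs <;> simp_all [mul_assoc]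
    have h2 : ML (th t) (Multiplicative.ofAdd (qh (ψ b).toAdd)) * SS 0 b' 1 =
        SS 0 b' 1 * ML (th t) (Multiplicative.ofAdd (qh (ψ b).toAdd)) := by
      ext1; ext1 p
      simp only [Subgroup.coe_mul, Equiv.Perm.mul_apply, SS_one_apply, ML_apply, Mf_floor]
      split_ifs with h
      · rw [Mf_of_zero _ _ p (by rw [h, qh_zero]), Mf_of_zero]
        simp only [h, qh_zero]
      · rfl
    rw [h1, mul_assoc, mul_assoc, ← mul_assoc (ML _ _), h2, mul_assoc]

lemma bet_injective (t : ℕ → B) (ψ : B →* Multiplicative (ℕ →₀ ℚ)) :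
    Function.Injective (bet t ψ) := by
  have h : ∀ b, (bet t ψ b : Equiv.Perm (ℚ × B)) (0, 1) = (0, b) := by
    intro b
    simp only [bet, MonoidHom.coe_mk, OneHom.coe_mk, Subgroup.coe_mul, Equiv.Perm.mul_apply, ML_apply]
    rw [Mf_of_zero _ _ _ (by simp [qh_zero]), SS_one_apply]
    simp
  intro b b' hb
  have := h b
  rw [hb, h b'] at this
  exact (congrArg Prod.snd this).symm

open scoped commutatorElement in
lemma partC (B : Type) [Group B] [Countable B] : ∃ (β : B →* ↥(LL B)) (p : ℕ → ↥(LL B) × ↥(LL B)),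
    Function.Injective β ∧
    ∀ b, β b ∈ Subgroup.closure (Set.range fun j => ⁅(p j).1, (p j).2⁆) := by
  classical
  obtain ⟨t, ψ, h⟩ := linalg B
  have hmem : ∀ b, bet t ψ b ∈ commutator ↥(LL B) := by
    intro b
    rw [← Abelianization.ker_of, MonoidHom.mem_ker]
    apply Additive.ofMul.injective
    have h1 : Additive.ofMul (Abelianization.of (bet t ψ b)) =
        cc b 1 + chiM (th t) (qh (ψ b).toAdd) := by
      simp only [bet, MonoidHom.coe_mk, OneHom.coe_mk, map_mul, ofMul_mul]
      rfl
    rw [h1, chiM_qh, ← h, thT_tmul, cc_one_one, sub_zero, add_neg_cancel, ofMul_one]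
  have hch : ∀ b, ∃ F : Finset (↥(LL B) × ↥(LL B)),
      bet t ψ b ∈ Subgroup.closure ((fun x : ↥(LL B) × ↥(LL B) => ⁅x.1, x.2⁆) '' (F : Set _)) := by
    intro b
    have := hmem b
    rw [commutator_eq_closure] at this
    generalize bet t ψ b = z at this ⊢
    induction this using Subgroup.closure_induction with
    | mem x hx =>
      obtain ⟨g₁, g₂, rfl⟩ := hx
      exact ⟨{(g₁, g₂)}, Subgroup.subset_closure ⟨(g₁, g₂), by simp, rfl⟩⟩
    | one => exact ⟨∅, one_mem _⟩
    | mul x y _ _ hx hy =>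
      obtain ⟨F, hF⟩ := hx
      obtain ⟨G, hG⟩ := hy
      refine ⟨F ∪ G, mul_mem (Subgroup.closure_mono (Set.image_mono ?_) hF)
        (Subgroup.closure_mono (Set.image_mono ?_) hG)⟩
      · simp
      · simp
    | inv x _ hx =>
      obtain ⟨F, hF⟩ := hx
      exact ⟨F, inv_mem hF⟩
  choose F hF using hch
  have hcount : (insert (1, 1) (⋃ b, (F b : Set (↥(LL B) × ↥(LL B))))).Countable :=
    (Set.countable_iUnion fun b => (F b).countable_toSet).insert _
  obtain ⟨p, hp⟩ := hcount.exists_eq_range ⟨_, Set.mem_insert _ _⟩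
  refine ⟨bet t ψ, p, bet_injective t ψ, fun b => Subgroup.closure_mono ?_ (hF b)⟩
  rintro _ ⟨x, hx, rfl⟩
  have : x ∈ Set.range p := hp ▸ Set.mem_insert_of_mem _ (Set.mem_iUnion.2 ⟨b, hx⟩)
  obtain ⟨j, rfl⟩ := this
  exact ⟨j, rfl⟩

end abel

lemma sub_of_hyp {B : Type*} [Group B] (h : ∀ F : Set B, F.Finite →
        HasSubexpGrowth {x : ↥(Subgroup.closure (F ∪ F⁻¹)) | (x : B) ∈ F ∪ F⁻¹})
    (T : Set B) (hT : T.Finite) : Sub T := by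
  have hf : (T ∪ T⁻¹).Finite := hT.union hT.inv
  have := h T hT
  rw [hasSubexp_closure_iff hf (by rw [Set.union_inv, inv_inv, Set.union_comm])] at this
  exact Sub.mono hf Set.subset_union_left this

open scoped commutatorElement in
lemma backward {B : Type} [Group B] [Countable B] (hB : ∀ T : Set B, T.Finite → Sub T) :
    ∃ (W : Type) (_ : Group W) (S : Set W),
        S.Finite ∧ S⁻¹ = S ∧ Subgroup.closure S = ⊤ ∧ HasSubexpGrowth S ∧
        ∃ φ : B →* W, Function.Injective φ := by
  obtain ⟨β, p, hβ, hcl⟩ := partC B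
  obtain ⟨P, _, S, φ, hSf, hSi, hSs, hφ, hc⟩ := partW (LL_locally hB) p
  have hin : ∀ b, φ (β b) ∈ Subgroup.closure S := by
    intro b
    have h1 : Subgroup.closure (Set.range fun j => ⁅(p j).1, (p j).2⁆) ≤
        (Subgroup.closure S).comap φ := by
      rw [Subgroup.closure_le]
      rintro _ ⟨j, rfl⟩
      exact hc j
    exact h1 (hcl b)
  refine ⟨↥(Subgroup.closure S), inferInstance, {x | (x : P) ∈ S}, ?_, ?_, ?_, ?_, ?_⟩
  · exact hSf.preimage Subtype.val_injective.injOn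
  · ext x
    simp only [Set.mem_inv, Set.mem_ofPred_eq, InvMemClass.coe_inv]
    rw [← Set.mem_inv, hSi]
  · exact Subgroup.closure_closure_coe_preimage
  · exact (hasSubexp_closure_iff hSf hSi).2 hSs
  · refine ⟨(φ.comp β).codRestrict _ hin, ?_⟩
    intro a b hab
    exact hβ (hφ (congrArg Subtype.val hab))

end SubexpEmb

theorem embeds_in_subexponential_iff (B : Type*) [Group B] :
    (∃ (W : Type) (_ : Group W) (S : Set W),
        S.Finite ∧ S⁻¹ = S ∧ Subgroup.closure S = ⊤ ∧ HasSubexpGrowth S ∧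
        ∃ φ : B →* W, Function.Injective φ) ↔
    (Countable B ∧ ∀ F : Set B, F.Finite →
        HasSubexpGrowth
          {x : ↥(Subgroup.closure (F ∪ F⁻¹)) | (x : B) ∈ F ∪ F⁻¹}) := by
  constructor
  · rintro ⟨W, _, S, hSf, hSi, hcl, hs, φ, hφ⟩
    obtain ⟨h1, h2⟩ := SubexpEmb.easy_direction hSf hSi hcl
      ((SubexpEmb.hasSubexp_iff hSf hSi hcl).1 hs) φ hφ
    refine ⟨h1, fun F hF => ?_⟩
    rw [SubexpEmb.hasSubexp_closure_iff (hF.union hF.inv)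
      (by rw [Set.union_inv, inv_inv, Set.union_comm])]
    exact h2 _ (hF.union hF.inv)
  · rintro ⟨h1, h2⟩
    have h3 := SubexpEmb.sub_of_hyp h2
    have : Small.{0} B := inferInstance
    let e : Shrink.{0} B ≃* B := Shrink.mulEquiv
    have : Countable (Shrink.{0} B) := e.injective.countable
    obtain ⟨W, i, S, a, b, c, d, φ, hφ⟩ := SubexpEmb.backward (B := Shrink.{0} B) (by
      intro T hT
      rw [← SubexpEmb.sub_image_iff e.toMonoidHom e.injective]
      exact h3 _ (hT.image _))
    exact ⟨W, i, S, a, b, c, d, φ.comp e.symm.toMonoidHom, hφ.comp e.symm.injective⟩
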